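/- Let n ≥ 2, (a,b) an open interval, f : (a,b) → ℝ matrix convex of order n, and λ₀ ∈ (a,b). Then the function g(x) = [x, λ₀]_f (i.e., g(x) = (f(x)−f(λ₀))/(x−λ₀) for x ≠ λ₀ and g(λ₀) = f′(λ₀)) is matrix monotone of order n on (a,b). -/

import Mathlib

open Set Matrix
open scoped ComplexOrder

/-- `f` is matrix monotone of order `n` on `(a,b)`. -/
def MatrixMonotoneOrder (n : ℕ) (a b : ℝ) (f : ℝ → ℝ) : Prop :=
  ∀ (A B : Matrix (Fin n) (Fin n) ℂ) (hA : A.IsHermitian) (hB : B.IsHermitian),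
    (∀ i, hA.eigenvalues i ∈ Ioo a b) → (∀ i, hB.eigenvalues i ∈ Ioo a b) →
    (B - A).PosSemidef → (hB.cfc f - hA.cfc f).PosSemidef

/-- `f` is matrix convex of order `n` on `(a,b)`. -/
def MatrixConvexOrder (n : ℕ) (a b : ℝ) (f : ℝ → ℝ) : Prop :=
  ∀ (A B : Matrix (Fin n) (Fin n) ℂ) (hA : A.IsHermitian) (hB : B.IsHermitian)
    (μ : ℝ), μ ∈ Icc (0 : ℝ) 1 →
    ∀ (hC : (μ • A + (1 - μ) • B).IsHermitian),
    (∀ i, hA.eigenvalues i ∈ Ioo a b) → (∀ i, hB.eigenvalues i ∈ Ioo a b) →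
    (μ • hA.cfc f + (1 - μ) • hB.cfc f - hC.cfc f).PosSemidef

/-- The divided difference of `F` at the family of nodes `x`. -/
noncomputable def divDiff {κ : Type*} [Fintype κ] [DecidableEq κ] (x : κ → ℝ) (F : ℝ → ℝ) : ℝ :=
  ∑ k, F (x k) / ∏ l, if l = k then 1 else x k - x l

section DivDiff

variable {κ : Type*} [Fintype κ] [DecidableEq κ]

lemma prod_ite_eq_prod_erase (x : κ → ℝ) (k : κ) (y : ℝ) :
    (∏ l, if l = k then 1 else y - x l) = ∏ l ∈ Finset.univ.erase k, (y - x l) := by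
  rw [Finset.prod_ite]
  simp [Finset.filter_ne']

open Polynomial in
lemma divDiff_eval {x : κ → ℝ} (hx : Function.Injective x) (P : ℝ[X])
    (hP : P.degree < Fintype.card κ) :
    divDiff x (fun t => P.eval t) = P.coeff (Fintype.card κ - 1) := by
  have := Lagrange.coeff_eq_sum (s := Finset.univ) (v := x) hx.injOn (P := P) hP
  rw [Finset.card_univ] at this
  rw [this, divDiff]
  simp only [prod_ite_eq_prod_erase]

lemma divDiff_add (x : κ → ℝ) (F G : ℝ → ℝ) :
    divDiff x (fun t => F t + G t) = divDiff x F + divDiff x G := by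
  simp [divDiff, add_div, Finset.sum_add_distrib]

lemma divDiff_sub (x : κ → ℝ) (F G : ℝ → ℝ) :
    divDiff x (fun t => F t - G t) = divDiff x F - divDiff x G := by
  simp [divDiff, sub_div, Finset.sum_sub_distrib]

lemma divDiff_const_mul (x : κ → ℝ) (c : ℝ) (F : ℝ → ℝ) :
    divDiff x (fun t => c * F t) = c * divDiff x F := by
  simp [divDiff, mul_div_assoc, Finset.mul_sum]

lemma divDiff_congr {x : κ → ℝ} {F G : ℝ → ℝ} (h : ∀ k, F (x k) = G (x k)) :
    divDiff x F = divDiff x G := by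
  simp [divDiff, h]

lemma divDiff_sumElim {ι : Type*} [Fintype ι] [DecidableEq ι] (x : κ → ℝ) (y : ι → ℝ)
    (F : ℝ → ℝ) :
    divDiff (Sum.elim x y) F =
      ∑ k, F (x k) / ((∏ l, if l = k then 1 else x k - x l) * ∏ l, (x k - y l)) +
      ∑ k, F (y k) / ((∏ l, (y k - x l)) * ∏ l, if l = k then 1 else y k - y l) := by
  simp [divDiff]

lemma divDiff_optionElim (x : κ → ℝ) (z : ℝ) (F : ℝ → ℝ) :
    divDiff (fun o : Option κ => o.elim z x) F =
      F z / ∏ l, (z - x l) +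
      ∑ k, F (x k) / ((x k - z) * ∏ l, if l = k then 1 else x k - x l) := by
  simp [divDiff, Fintype.sum_option, Fintype.prod_option]

lemma tendsto_divDiff {α : Type*} {l : Filter α} {G : α → ℝ → ℝ} {F : ℝ → ℝ} {x : κ → ℝ}
    (h : ∀ k, Filter.Tendsto (fun i => G i (x k)) l (nhds (F (x k)))) :
    Filter.Tendsto (fun i => divDiff x (G i)) l (nhds (divDiff x F)) :=
  tendsto_finsetSum _ fun k _ => (h k).div_const _

/-- Iterated Rolle theorem. -/
lemma exists_iteratedDeriv_eq_zero {α β : ℝ} (m : ℕ) :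
    ∀ (G : ℝ → ℝ), ContDiff ℝ m G → ∀ x : Fin (m + 1) → ℝ, StrictMono x →
      (∀ i, x i ∈ Ioo α β) → (∀ i, G (x i) = 0) → ∃ ξ ∈ Ioo α β, iteratedDeriv m G ξ = 0 := by
  induction m with
  | zero =>
    intro G _ x _ hI h0
    exact ⟨x 0, hI 0, by simpa using h0 0⟩
  | succ m ih =>
    intro G hG x hx hI h0
    have hr : ∀ i : Fin (m + 1), ∃ c ∈ Ioo (x i.castSucc) (x i.succ), deriv G c = 0 := fun i =>
      exists_deriv_eq_zero (hx Fin.castSucc_lt_succ) hG.continuous.continuousOn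
        (by rw [h0, h0])
    choose y hy hy0 using hr
    have hG' : ContDiff ℝ m (deriv G) := by
      have : ContDiff ℝ (m + 1 : ℕ) G := hG
      push_cast at this
      exact (contDiff_succ_iff_deriv.1 this).2.2
    obtain ⟨ξ, hξ, h⟩ := ih (deriv G) hG' y
      (fun i j hij => (hy i).2.trans_le
        ((hx.monotone (Fin.succ_le_castSucc_iff.2 hij)).trans (hy j).1.le))
      (fun i => ⟨(hI _).1.trans (hy i).1, (hy i).2.trans (hI _).2⟩) hy0
    exact ⟨ξ, hξ, by rw [iteratedDeriv_succ', h]⟩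

open Polynomial in
lemma iteratedDeriv_eval (P : ℝ[X]) (m : ℕ) :
    iteratedDeriv m (fun t => P.eval t) = fun t => (derivative^[m] P).eval t := by
  induction m generalizing P with
  | zero => simp
  | succ m ih =>
    rw [iteratedDeriv_succ', Function.iterate_succ_apply, ← ih]
    congr 1
    ext t
    simp

open Polynomial in
/-- Mean value theorem for divided differences. -/
lemma exists_divDiff_eq {α β : ℝ} {m : ℕ} {F : ℝ → ℝ} (hF : ContDiff ℝ m F) {x : κ → ℝ}
    (hx : Function.Injective x) (hI : ∀ k, x k ∈ Ioo α β) (hm : Fintype.card κ = m + 1) :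
    ∃ ξ ∈ Ioo α β, iteratedDeriv m F ξ = m.factorial * divDiff x F := by
  set P : ℝ[X] := Lagrange.interpolate Finset.univ x (fun k => F (x k)) with hPdef
  have hPev : ∀ k, P.eval (x k) = F (x k) := fun k =>
    Lagrange.eval_interpolate_at_node _ hx.injOn (Finset.mem_univ k)
  have hdeg : P.degree < Fintype.card κ := Lagrange.degree_interpolate_lt _ hx.injOn
  have hcoeff : divDiff x F = P.coeff m := by
    rw [divDiff_congr (G := fun t => P.eval t) (fun k => (hPev k).symm), divDiff_eval hx P hdeg, hm]
    simp
  have hPC : ContDiff ℝ m (fun t => P.eval t) := by simpa using P.contDiff_aeval (𝕜 := ℝ) (n := m)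
  have hcard : (Finset.univ.image x).card = m + 1 := by
    rw [Finset.card_image_of_injective _ hx, Finset.card_univ, hm]
  have hmem : ∀ i, ∃ k, x k = (Finset.univ.image x).orderEmbOfFin hcard i := fun i => by
    obtain ⟨k, -, hk⟩ := Finset.mem_image.1 ((Finset.univ.image x).orderEmbOfFin_mem hcard i)
    exact ⟨k, hk⟩
  obtain ⟨ξ, hξ, h0⟩ := exists_iteratedDeriv_eq_zero (α := α) (β := β) m
    (fun t => F t - P.eval t) (hF.sub hPC) ((Finset.univ.image x).orderEmbOfFin hcard)
    (OrderEmbedding.strictMono _)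
    (fun i => by obtain ⟨k, hk⟩ := hmem i; rw [← hk]; exact hI k)
    (fun i => by obtain ⟨k, hk⟩ := hmem i; rw [← hk, hPev, sub_self])
  refine ⟨ξ, hξ, ?_⟩
  rw [iteratedDeriv_fun_sub hF.contDiffAt hPC.contDiffAt, iteratedDeriv_eval, sub_eq_zero] at h0
  have hle : P.natDegree ≤ m := by
    refine natDegree_le_iff_coeff_eq_zero.2 fun N hN => coeff_eq_zero_of_degree_lt ?_
    refine hdeg.trans_le ?_
    rw [hm]
    exact_mod_cast hN
  have hnd : (derivative^[m] P).natDegree = 0 := by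
    have := natDegree_iterate_derivative P m
    omega
  rw [h0, hcoeff]
  beta_reduce
  rw [eq_C_of_natDegree_eq_zero hnd, eval_C, coeff_iterate_derivative]
  simp [Nat.descFactorial_self]

end DivDiff

section RankOne

variable {ι : Type*} [Fintype ι] {E : Type*} [NormedAddCommGroup E] [InnerProductSpace ℂ E]

/-- The relation between the eigenvalues `a`, `b` and the eigenbases `e`, `u` of two Hermitian
operators whose difference is the rank one operator `τ v v*`. -/
def RankOneRel (e : OrthonormalBasis ι ℂ E) (a : ι → ℝ) (u : OrthonormalBasis ι ℂ E) (b : ι → ℝ)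
    (τ : ℝ) (v : E) : Prop :=
  ∀ i j, ((b j - a i : ℝ) : ℂ) * inner ℂ (e i) (u j) = τ * (inner ℂ (e i) v * inner ℂ v (u j))

/-- The quadratic form of `f(T)` at `w`, where `T` has eigenbasis `e` with eigenvalues `a`. -/
noncomputable def quadForm (e : OrthonormalBasis ι ℂ E) (a : ι → ℝ) (f : ℝ → ℝ) (w : E) : ℝ :=
  ∑ i, f (a i) * ‖inner ℂ (e i) w‖ ^ 2

variable {e u : OrthonormalBasis ι ℂ E} {a b : ι → ℝ} {τ : ℝ} {v : E}

lemma RankOneRel.symm (h : RankOneRel e a u b τ v) : RankOneRel u b e a (-τ) v := by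
  intro j i
  have := congrArg (starRingEnd ℂ) (h i j)
  simp only [map_mul, Complex.conj_ofReal, inner_conj_symm] at this
  push_cast at this ⊢
  linear_combination -this

lemma RankOneRel.inner_ne_zero (h : RankOneRel e a u b τ v) (ha : Function.Injective a)
    (hv : ∀ i, inner ℂ (e i) v ≠ 0) (j : ι) : inner ℂ v (u j) ≠ 0 := by
  intro h0
  have hz : ∀ i, b j = a i ∨ inner ℂ (e i) (u j) = 0 := fun i => by
    have := h i j
    rw [h0, mul_zero, mul_zero, mul_eq_zero] at this
    simpa [sub_eq_zero] using this
  have hne : ∃ i, inner ℂ (e i) (u j) ≠ 0 := by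
    by_contra! hall
    have h1 := e.sum_sq_norm_inner_right (u j)
    simp [hall] at h1
  obtain ⟨i, hi⟩ := hne
  have hbi : b j = a i := (hz i).resolve_right hi
  have hk : ∀ k, k ≠ i → inner ℂ (e k) (u j) = 0 := fun k hk =>
    (hz k).resolve_left fun hbk => hk (ha (hbk.symm.trans hbi))
  have hsum := e.sum_inner_mul_inner v (u j)
  rw [h0, Finset.sum_eq_single i (fun k _ hki => by rw [hk k hki, mul_zero]) (by simp),
    mul_eq_zero] at hsum
  rcases hsum with hs | hs
  · exact hv i (inner_eq_zero_symm.1 hs)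
  · exact hi hs

lemma RankOneRel.disjoint (h : RankOneRel e a u b τ v) (ha : Function.Injective a) (hτ : τ ≠ 0)
    (hv : ∀ i, inner ℂ (e i) v ≠ 0) (i j : ι) : b j ≠ a i := by
  intro hba
  have := h i j
  rw [hba, sub_self, Complex.ofReal_zero, zero_mul, eq_comm] at this
  simp [hτ, hv i, h.inner_ne_zero ha hv j] at this

lemma RankOneRel.inner_eq (h : RankOneRel e a u b τ v) (hd : ∀ i j, b j ≠ a i) (i j : ι) :
    inner ℂ (e i) (u j) = τ * (inner ℂ (e i) v * inner ℂ v (u j)) / ((b j - a i : ℝ) : ℂ) := by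
  rw [← h i j, mul_div_cancel_left₀]
  exact_mod_cast sub_ne_zero.2 (hd i j)

lemma RankOneRel.injective (h : RankOneRel e a u b τ v) (ha : Function.Injective a) (hτ : τ ≠ 0)
    (hv : ∀ i, inner ℂ (e i) v ≠ 0) : Function.Injective b := by
  intro j k hjk
  by_contra hne
  have hd := h.disjoint ha hτ hv
  have hU := h.inner_ne_zero ha hv
  have hprop : u j = (inner ℂ v (u j) / inner ℂ v (u k)) • u k := by
    refine InnerProductSpace.ext_inner_left_basis e.toBasis fun i => ?_
    have hk := hU k
    rw [inner_smul_right, OrthonormalBasis.coe_toBasis, h.inner_eq hd, h.inner_eq hd, hjk]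
    field_simp
  have h1 : inner ℂ (u k) (u j) = 0 := u.orthonormal.2 (Ne.symm hne)
  rw [hprop, inner_smul_right, inner_self_eq_one_of_norm_eq_one (u.norm_eq_one k), mul_one] at h1
  exact div_ne_zero (hU j) (hU k) h1

lemma inner_mul_inner_symm_eq (x y : E) :
    inner ℂ x y * inner ℂ y x = ((‖inner ℂ x y‖ ^ 2 : ℝ) : ℂ) := by
  rw [← inner_conj_symm y x, Complex.mul_conj']
  push_cast
  rfl

lemma RankOneRel.secular (h : RankOneRel e a u b τ v) (hd : ∀ i j, b j ≠ a i) {j : ι}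
    (hU : inner ℂ v (u j) ≠ 0) : ∑ i, τ * ‖inner ℂ (e i) v‖ ^ 2 / (b j - a i) = 1 := by
  have hsum := e.sum_inner_mul_inner v (u j)
  have : (∑ i, ((τ * ‖inner ℂ (e i) v‖ ^ 2 / (b j - a i) : ℝ) : ℂ)) * inner ℂ v (u j) =
      1 * inner ℂ v (u j) := by
    rw [one_mul, ← hsum, Finset.sum_mul]
    refine (Finset.sum_congr rfl fun i _ => ?_)
    rw [h.inner_eq hd, hsum, Complex.ofReal_div, Complex.ofReal_mul, ← inner_mul_inner_symm_eq]
    ring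
  exact_mod_cast mul_right_cancel₀ hU this

variable [DecidableEq ι]

open Polynomial in
lemma RankOneRel.sum_mul_prod (h : RankOneRel e a u b τ v) (hd : ∀ i j, b j ≠ a i)
    (hb : Function.Injective b) (hU : ∀ j, inner ℂ v (u j) ≠ 0) (x : ℝ) :
    ∑ i, τ * ‖inner ℂ (e i) v‖ ^ 2 * (∏ l, if l = i then 1 else x - a l) =
      ∏ l, (x - a l) - ∏ l, (x - b l) := by
  rcases isEmpty_or_nonempty ι with hι | hι
  · simp
  have hmain : ∑ i, C (τ * ‖inner ℂ (e i) v‖ ^ 2) * Lagrange.nodal (Finset.univ.erase i) a =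
      Lagrange.nodal Finset.univ a - Lagrange.nodal Finset.univ b := by
    refine eq_of_degrees_lt_of_eval_index_eq Finset.univ hb.injOn ?_ ?_ fun j _ => ?_
    · refine (degree_sum_le _ _).trans_lt ?_
      refine (Finset.sup_lt_iff (by simp [bot_lt_iff_ne_bot])).2 fun i _ => ?_
      refine (degree_mul_le_of_le degree_C_le le_rfl).trans_lt ?_
      rw [zero_add, Lagrange.degree_nodal]
      exact_mod_cast Finset.card_erase_lt_of_mem (Finset.mem_univ i)
    · refine (degree_sub_lt_left ?_ Lagrange.nodal_ne_zero ?_).trans_eq Lagrange.degree_nodal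
      · rw [Lagrange.degree_nodal, Lagrange.degree_nodal]
      · rw [Lagrange.nodal_monic.leadingCoeff, Lagrange.nodal_monic.leadingCoeff]
    · rw [eval_sub, Lagrange.eval_nodal_at_node (Finset.mem_univ j), sub_zero, eval_finsetSum,
        Lagrange.eval_nodal, ← mul_one (∏ _ ∈ _, _), ← h.secular hd (hU j), Finset.mul_sum]
      refine Finset.sum_congr rfl fun i _ => ?_
      rw [eval_C_mul, Lagrange.eval_nodal, ← Finset.mul_prod_erase _ _ (Finset.mem_univ i)]
      have := sub_ne_zero.2 (hd i j)
      field_simp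
  have := congrArg (eval x) hmain
  simpa [eval_finsetSum, Lagrange.eval_nodal, prod_ite_eq_prod_erase] using this

lemma prod_ite_sub_ne_zero {x : ι → ℝ} (hx : Function.Injective x) (i : ι) :
    (∏ l, if l = i then 1 else x i - x l) ≠ 0 := by
  refine Finset.prod_ne_zero_iff.2 fun l _ => ?_
  split_ifs with hl
  · exact one_ne_zero
  · exact sub_ne_zero.2 fun hxl => hl (hx hxl.symm)

lemma RankOneRel.prod_eq (h : RankOneRel e a u b τ v) (hd : ∀ i j, b j ≠ a i)
    (hb : Function.Injective b) (hU : ∀ j, inner ℂ v (u j) ≠ 0) (i : ι) :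
    ∏ l, (a i - b l) =
      -(τ * ‖inner ℂ (e i) v‖ ^ 2 * ∏ l, if l = i then 1 else a i - a l) := by
  have := h.sum_mul_prod hd hb hU (a i)
  rw [Finset.prod_eq_zero (Finset.mem_univ i) (sub_self _), zero_sub,
    Finset.sum_eq_single i (fun k _ hk => ?_) (by simp)] at this
  · rw [this, neg_neg]
  · rw [Finset.prod_eq_zero (Finset.mem_univ i) (by simp [hk.symm]), mul_zero]

lemma RankOneRel.sum_div (h : RankOneRel e a u b τ v) (hd : ∀ i j, b j ≠ a i)
    (hb : Function.Injective b) (hU : ∀ j, inner ℂ v (u j) ≠ 0) {x : ℝ} (hx : ∀ i, x ≠ a i) :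
    ∑ i, τ * ‖inner ℂ (e i) v‖ ^ 2 / (x - a i) = 1 - (∏ l, (x - b l)) / ∏ l, (x - a l) := by
  have hp : ∏ l, (x - a l) ≠ 0 := Finset.prod_ne_zero_iff.2 fun l _ => sub_ne_zero.2 (hx l)
  rw [eq_sub_iff_add_eq, ← eq_sub_iff_add_eq']
  rw [div_eq_iff hp, sub_mul, one_mul, eq_sub_iff_add_eq', ← eq_sub_iff_add_eq,
    ← h.sum_mul_prod hd hb hU x, Finset.sum_mul]
  refine Finset.sum_congr rfl fun i _ => ?_
  have := sub_ne_zero.2 (hx i)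
  rw [prod_ite_eq_prod_erase, ← Finset.mul_prod_erase _ _ (Finset.mem_univ i)]
  field_simp

/-- The polynomial `⟨v, adj(x - A) w⟩`, for `A` with eigenbasis `e` and eigenvalues `a`. -/
noncomputable def adjPoly (e : OrthonormalBasis ι ℂ E) (a : ι → ℝ) (v w : E) (x : ℝ) : ℂ :=
  ∑ i, inner ℂ v (e i) * inner ℂ (e i) w * ((∏ l, if l = i then 1 else x - a l : ℝ) : ℂ)

lemma adjPoly_node (i : ι) (w : E) :
    adjPoly e a v w (a i) =
      inner ℂ v (e i) * inner ℂ (e i) w * ((∏ l, if l = i then 1 else a i - a l : ℝ) : ℂ) := by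
  rw [adjPoly, Finset.sum_eq_single i (fun k _ hk => ?_) (by simp)]
  rw [Finset.prod_eq_zero (Finset.mem_univ i) (by simp [hk.symm]), Complex.ofReal_zero, mul_zero]

lemma RankOneRel.adjPoly_eq (h : RankOneRel e a u b τ v) (j : ι) (w : E) :
    inner ℂ (u j) w * ((∏ l, (b j - a l) : ℝ) : ℂ) =
      τ * inner ℂ (u j) v * adjPoly e a v w (b j) := by
  rw [← e.sum_inner_mul_inner (u j) w, adjPoly, Finset.sum_mul, Finset.mul_sum]
  refine Finset.sum_congr rfl fun i _ => ?_
  rw [prod_ite_eq_prod_erase, ← Finset.mul_prod_erase _ _ (Finset.mem_univ i)]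
  have hs := h.symm j i
  push_cast at hs ⊢
  linear_combination (-inner ℂ (e i) w * ∏ x ∈ Finset.univ.erase i, ((b j : ℂ) - a x)) * hs

/-- For a generic rank one perturbation, the increment of the quadratic form of `f` is a divided
difference of `f` times the squared modulus of a polynomial. -/
lemma RankOneRel.quadForm_sub (h : RankOneRel e a u b τ v) (hd : ∀ i j, b j ≠ a i)
    (ha : Function.Injective a) (hb : Function.Injective b)
    (hV : ∀ i, inner ℂ (e i) v ≠ 0) (hU : ∀ j, inner ℂ v (u j) ≠ 0) (hτ : τ ≠ 0)
    (f : ℝ → ℝ) (w : E) :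
    quadForm u b f w - quadForm e a f w =
      τ * divDiff (Sum.elim a b) (fun x => f x * ‖adjPoly e a v w x‖ ^ 2) := by
  have hA : ∀ i, f (a i) * ‖adjPoly e a v w (a i)‖ ^ 2 /
      ((∏ l, if l = i then 1 else a i - a l) * ∏ l, (a i - b l)) =
      -(f (a i) * ‖inner ℂ (e i) w‖ ^ 2 / τ) := fun i => by
    have h1 := prod_ite_sub_ne_zero ha i
    have h2 : ‖inner ℂ (e i) v‖ ≠ 0 := norm_ne_zero_iff.2 (hV i)
    rw [h.prod_eq hd hb hU, adjPoly_node, norm_mul, norm_mul, Complex.norm_real, Real.norm_eq_abs,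
      mul_pow, mul_pow, sq_abs, norm_inner_symm v]
    field_simp
  have hB : ∀ j, f (b j) * ‖adjPoly e a v w (b j)‖ ^ 2 /
      ((∏ l, (b j - a l)) * ∏ l, if l = j then 1 else b j - b l) =
      f (b j) * ‖inner ℂ (u j) w‖ ^ 2 / τ := fun j => by
    have h1 := prod_ite_sub_ne_zero hb j
    have h2 : ‖inner ℂ (u j) v‖ ≠ 0 := by
      rw [norm_inner_symm]; exact norm_ne_zero_iff.2 (hU j)
    have h3 := h.symm.prod_eq (fun i j => (hd j i).symm) ha
      (fun i h0 => hV i (inner_eq_zero_symm.1 h0)) j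
    have h4 := congrArg (fun z => ‖z‖ ^ 2) (h.adjPoly_eq j w)
    simp only [norm_mul, Complex.norm_real, Real.norm_eq_abs, mul_pow, sq_abs] at h4
    have h5 : ‖inner ℂ (u j) w‖ ^ 2 =
        τ ^ 2 * ‖inner ℂ (u j) v‖ ^ 2 * ‖adjPoly e a v w (b j)‖ ^ 2 / (∏ l, (b j - a l)) ^ 2 := by
      rw [← h4, mul_div_cancel_right₀]
      exact pow_ne_zero _ (Finset.prod_ne_zero_iff.2 fun l _ => sub_ne_zero.2 (hd l j))
    rw [h5, h3]
    field_simp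
  rw [divDiff_sumElim, Finset.sum_congr rfl fun i _ => hA i, Finset.sum_congr rfl fun j _ => hB j,
    Finset.sum_neg_distrib, ← Finset.sum_div, ← Finset.sum_div]
  simp only [quadForm]
  field_simp
  ring

/-- Adding a further rank one perturbation changes a divided difference by a nonnegative
combination of divided differences of one order higher. -/
lemma RankOneRel.divDiff_sub (h : RankOneRel e a u b τ v) (hd : ∀ i j, b j ≠ a i)
    (ha : Function.Injective a) (hb : Function.Injective b)
    (hV : ∀ i, inner ℂ (e i) v ≠ 0)
    {c : ι → ℝ} (hca : ∀ i j, a j ≠ c i) (hcb : ∀ i j, b j ≠ c i) (F : ℝ → ℝ) :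
    divDiff (Sum.elim c b) F - divDiff (Sum.elim c a) F =
      ∑ k, τ * ‖inner ℂ (u k) v‖ ^ 2 *
        divDiff (fun o : Option (ι ⊕ ι) => o.elim (b k) (Sum.elim c a)) F := by
  have hV' : ∀ i, inner ℂ v (e i) ≠ 0 := fun i h0 => hV i (inner_eq_zero_symm.1 h0)
  have hres : ∀ x, (∀ j, x ≠ b j) → ∑ k, τ * ‖inner ℂ (u k) v‖ ^ 2 / (x - b k) =
      (∏ l, (x - a l)) / (∏ l, (x - b l)) - 1 := fun x hx => by
    have := h.symm.sum_div (fun i j => (hd j i).symm) ha hV' hx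
    simp only [neg_mul, neg_div, Finset.sum_neg_distrib] at this
    linarith
  have hwt : ∀ k, τ * ‖inner ℂ (u k) v‖ ^ 2 * (∏ l, if l = k then 1 else b k - b l) =
      ∏ l, (b k - a l) := fun k => by
    rw [h.symm.prod_eq (fun i j => (hd j i).symm) ha hV' k]
    ring
  have hpa : ∀ i, ∏ l, (c i - a l) ≠ 0 := fun i =>
    Finset.prod_ne_zero_iff.2 fun l _ => sub_ne_zero.2 (hca i l).symm
  have hpb : ∀ i, ∏ l, (c i - b l) ≠ 0 := fun i =>
    Finset.prod_ne_zero_iff.2 fun l _ => sub_ne_zero.2 (hcb i l).symm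
  have hpba : ∀ k, ∏ l, (b k - a l) ≠ 0 := fun k =>
    Finset.prod_ne_zero_iff.2 fun l _ => sub_ne_zero.2 (hd l k)
  simp only [divDiff_optionElim, Fintype.prod_sum_type, Fintype.sum_sum_type, Sum.elim_inl,
    Sum.elim_inr, Sum.inl.injEq, Sum.inr.injEq, reduceCtorEq, if_false, mul_add,
    Finset.sum_add_distrib, Finset.mul_sum]
  rw [Finset.sum_comm (f := fun k i => τ * ‖inner ℂ (u k) v‖ ^ 2 * (F (c i) / _)),
    Finset.sum_comm (f := fun k i => τ * ‖inner ℂ (u k) v‖ ^ 2 * (F (a i) / _))]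
  have hC : ∀ i, ∑ k, τ * ‖inner ℂ (u k) v‖ ^ 2 * (F (c i) / ((c i - b k) *
      ((∏ l, if l = i then 1 else c i - c l) * ∏ l, (c i - a l)))) =
      F (c i) / ((∏ l, if l = i then 1 else c i - c l) * ∏ l, (c i - b l)) -
      F (c i) / ((∏ l, if l = i then 1 else c i - c l) * ∏ l, (c i - a l)) := fun i => by
    have h1 := hres (c i) fun j => (hcb i j).symm
    have h2 := hpa i
    have h3 := hpb i
    calc _ = (∑ k, τ * ‖inner ℂ (u k) v‖ ^ 2 / (c i - b k)) * (F (c i) /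
        ((∏ l, if l = i then 1 else c i - c l) * ∏ l, (c i - a l))) := by
          rw [Finset.sum_mul]
          refine Finset.sum_congr rfl fun k _ => ?_
          simp only [div_eq_mul_inv, mul_inv]
          ring
      _ = _ := by
          rw [h1, sub_mul, one_mul]
          congr 1
          simp only [div_eq_mul_inv, mul_inv]
          field_simp
  have hA : ∀ i, ∑ k, τ * ‖inner ℂ (u k) v‖ ^ 2 * (F (a i) / ((a i - b k) *
      ((∏ l, (a i - c l)) * ∏ l, if l = i then 1 else a i - a l))) =
      -(F (a i) / ((∏ l, (a i - c l)) * ∏ l, if l = i then 1 else a i - a l)) := fun i => by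
    have h1 := hres (a i) fun j => (hd i j).symm
    rw [Finset.prod_eq_zero (f := fun l => a i - a l) (Finset.mem_univ i) (sub_self _), zero_div,
      zero_sub] at h1
    calc _ = (∑ k, τ * ‖inner ℂ (u k) v‖ ^ 2 / (a i - b k)) * (F (a i) /
        ((∏ l, (a i - c l)) * ∏ l, if l = i then 1 else a i - a l)) := by
          rw [Finset.sum_mul]
          refine Finset.sum_congr rfl fun k _ => ?_
          simp only [div_eq_mul_inv, mul_inv]
          ring
      _ = _ := by rw [h1, neg_one_mul]
  have hB : ∀ k, τ * ‖inner ℂ (u k) v‖ ^ 2 *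
      (F (b k) / ((∏ l, (b k - c l)) * ∏ l, (b k - a l))) =
      F (b k) / ((∏ l, (b k - c l)) * ∏ l, if l = k then 1 else b k - b l) := fun k => by
    have h1 := hwt k
    have h2 := hpba k
    have h3 := prod_ite_sub_ne_zero hb k
    rw [div_eq_mul_inv, div_eq_mul_inv, mul_inv, mul_inv]
    have : τ * ‖inner ℂ (u k) v‖ ^ 2 * (∏ l, (b k - a l))⁻¹ =
        (∏ l, if l = k then 1 else b k - b l)⁻¹ := by
      rw [← h1] at h2 ⊢
      rw [mul_inv, mul_inv_cancel_left₀ (left_ne_zero_of_mul h2)]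
    rw [← this]
    ring
  rw [Finset.sum_congr rfl fun i _ => hC i, Finset.sum_congr rfl fun i _ => hA i,
    Finset.sum_congr rfl fun i _ => hB i, divDiff_sumElim, divDiff_sumElim]
  simp only [Finset.sum_sub_distrib, Finset.sum_neg_distrib]
  ring

end RankOne

section Diag

variable {ι : Type*} [Fintype ι] {E : Type*} [NormedAddCommGroup E] [InnerProductSpace ℂ E]

/-- The operator `T` is diagonal in the orthonormal basis `e`, with real eigenvalues `d`. -/
def Diag (T : E →ₗ[ℂ] E) (e : OrthonormalBasis ι ℂ E) (d : ι → ℝ) : Prop :=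
  ∀ i, T (e i) = (d i : ℂ) • e i

variable {T S : E →ₗ[ℂ] E} {e u : OrthonormalBasis ι ℂ E} {a b : ι → ℝ} {τ : ℝ} {v : E}

lemma Diag.inner_apply (h : Diag T e a) (i : ι) (x : E) :
    inner ℂ (e i) (T x) = a i * inner ℂ (e i) x := by
  classical
  conv_lhs => rw [← e.sum_repr' x, map_sum, inner_sum]
  rw [Finset.sum_eq_single i]
  · rw [map_smul, h i, inner_smul_right, inner_smul_right,
      inner_self_eq_one_of_norm_eq_one (e.norm_eq_one i)]
    ring
  · intro k _ hk
    rw [map_smul, h k, inner_smul_right, inner_smul_right, e.orthonormal.2 hk.symm]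
    ring
  · simp

lemma Diag.inner_self (h : Diag T e a) (w : E) :
    inner ℂ w (T w) = ((∑ i, a i * ‖inner ℂ (e i) w‖ ^ 2 : ℝ) : ℂ) := by
  rw [← e.sum_inner_mul_inner, Complex.ofReal_sum]
  refine Finset.sum_congr rfl fun i _ => ?_
  rw [h.inner_apply, Complex.ofReal_mul, ← norm_inner_symm, ← inner_mul_inner_symm_eq]
  ring

lemma Diag.isSymmetric (h : Diag T e a) : T.IsSymmetric := by
  intro x y
  rw [← e.sum_inner_mul_inner, ← e.sum_inner_mul_inner]
  refine Finset.sum_congr rfl fun i _ => ?_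
  rw [← inner_conj_symm, h.inner_apply, h.inner_apply, map_mul, Complex.conj_ofReal,
    inner_conj_symm]
  ring

lemma Diag.rankOneRel (hT : Diag T e a) (hS : Diag S u b)
    (h : ∀ x, S x = T x + (τ * inner ℂ v x : ℂ) • v) : RankOneRel e a u b τ v := by
  intro i j
  have h1 : inner ℂ (e i) (S (u j)) = b j * inner ℂ (e i) (u j) := by
    rw [hS j, inner_smul_right]
  rw [h, inner_add_right, hT.inner_apply, inner_smul_right] at h1
  push_cast
  linear_combination -h1

lemma quadForm_eq_of_diag (hT : Diag T e a) (hS : Diag T u b) (f : ℝ → ℝ) (w : E) :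
    quadForm e a f w = quadForm u b f w := by
  have h : RankOneRel e a u b 0 0 := hT.rankOneRel hS (by simp)
  have hf : ∀ i j, (f (a i) : ℂ) * inner ℂ (e i) (u j) = f (b j) * inner ℂ (e i) (u j) := by
    intro i j
    have := h i j
    simp only [Complex.ofReal_zero, zero_mul, mul_eq_zero] at this
    rcases this with h1 | h1
    · rw [sub_eq_zero.1 (Complex.ofReal_eq_zero.1 h1)]
    · rw [h1, mul_zero, mul_zero]
  have h1 : ((quadForm e a f w : ℝ) : ℂ) =
      ∑ i, ∑ j, f (a i) * inner ℂ (e i) (u j) * (inner ℂ w (e i) * inner ℂ (u j) w) := by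
    rw [quadForm, Complex.ofReal_sum]
    refine Finset.sum_congr rfl fun i _ => ?_
    rw [Complex.ofReal_mul, ← inner_mul_inner_symm_eq, ← u.sum_inner_mul_inner (e i) w,
      Finset.sum_mul, Finset.mul_sum]
    exact Finset.sum_congr rfl fun j _ => by ring
  have h2 : ((quadForm u b f w : ℝ) : ℂ) =
      ∑ i, ∑ j, f (b j) * inner ℂ (e i) (u j) * (inner ℂ w (e i) * inner ℂ (u j) w) := by
    rw [quadForm, Complex.ofReal_sum, Finset.sum_comm]
    refine Finset.sum_congr rfl fun j _ => ?_
    rw [Complex.ofReal_mul, ← inner_mul_inner_symm_eq, mul_comm (inner ℂ (u j) w),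
      ← e.sum_inner_mul_inner w (u j), Finset.sum_mul, Finset.mul_sum]
    exact Finset.sum_congr rfl fun j _ => by ring
  rw [← Complex.ofReal_inj, h1, h2]
  exact Finset.sum_congr rfl fun i _ => Finset.sum_congr rfl fun j _ => by rw [hf]

/-- Rayleigh quotient bounds localise the spectrum of an operator. -/
lemma Diag.mem_of_inner_mem (h : Diag T e a) {s : Set ℝ}
    (hs : ∀ x : E, ‖x‖ = 1 → (inner ℂ x (T x)).re ∈ s) (i : ι) : a i ∈ s := by
  have := hs (e i) (e.norm_eq_one i)
  rwa [h i, inner_smul_right, inner_self_eq_one_of_norm_eq_one (e.norm_eq_one i), mul_one,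
    Complex.ofReal_re] at this

lemma Diag.re_inner_mem (h : Diag T e a) {s : Set ℝ} (hc : Convex ℝ s) (hs : ∀ i, a i ∈ s)
    {x : E} (hx : ‖x‖ = 1) : (inner ℂ x (T x)).re ∈ s := by
  rw [h.inner_self, Complex.ofReal_re]
  have h1 := e.sum_sq_norm_inner_right x
  rw [hx, one_pow] at h1
  have := hc.sum_mem (t := Finset.univ) (fun i _ => sq_nonneg ‖inner ℂ (e i) x‖) h1
    (fun i _ => hs i)
  simpa [mul_comm] using this

lemma Diag.mem_of_diag (hT : Diag T e a) (hS : Diag T u b) {s : Set ℝ} (hc : Convex ℝ s)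
    (hs : ∀ i, a i ∈ s) (i : ι) : b i ∈ s :=
  hS.mem_of_inner_mem (fun _ hx => hT.re_inner_mem hc hs hx) i

lemma Diag.add_const (h : Diag T e a) (c : ℝ) :
    Diag (T + (c : ℂ) • LinearMap.id) e (fun i => a i + c) := by
  intro i
  simp [h i, add_smul]

end Diag

lemma exists_diag {n : ℕ} {T : EuclideanSpace ℂ (Fin n) →ₗ[ℂ] EuclideanSpace ℂ (Fin n)}
    (hT : T.IsSymmetric) :
    ∃ (e : OrthonormalBasis (Fin n) ℂ (EuclideanSpace ℂ (Fin n))) (d : Fin n → ℝ), Diag T e d :=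
  ⟨hT.eigenvectorBasis (by simp), hT.eigenvalues (by simp), fun i => by
    simp [hT.apply_eigenvectorBasis]⟩

lemma Matrix.IsHermitian.diag {n : ℕ} {A : Matrix (Fin n) (Fin n) ℂ} (hA : A.IsHermitian) :
    Diag A.toEuclideanLin hA.eigenvectorBasis hA.eigenvalues := by
  intro i
  rw [Matrix.toLpLin_apply, hA.mulVec_eigenvectorBasis]
  ext
  simp

lemma Matrix.IsHermitian.diag_cfc {n : ℕ} {A : Matrix (Fin n) (Fin n) ℂ} (hA : A.IsHermitian)
    (f : ℝ → ℝ) :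
    Diag (hA.cfc f).toEuclideanLin hA.eigenvectorBasis (f ∘ hA.eigenvalues) := by
  intro i
  rw [Matrix.toLpLin_apply, Matrix.IsHermitian.cfc, Unitary.conjStarAlgAut_apply,
    ← Matrix.mulVec_mulVec, hA.star_eigenvectorUnitary_mulVec, ← Matrix.mulVec_mulVec,
    Matrix.diagonal_mulVec_single, mul_one, ← mul_one (((RCLike.ofReal ∘ f ∘ hA.eigenvalues) i : ℂ)),
    ← smul_eq_mul, Pi.single_smul, Matrix.mulVec_smul, hA.eigenvectorUnitary_mulVec]
  ext
  simp

lemma Matrix.IsHermitian.inner_cfc {n : ℕ} {A : Matrix (Fin n) (Fin n) ℂ} (hA : A.IsHermitian)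
    (f : ℝ → ℝ) (w : EuclideanSpace ℂ (Fin n)) :
    inner ℂ w ((hA.cfc f).toEuclideanLin w) =
      ((quadForm hA.eigenvectorBasis hA.eigenvalues f w : ℝ) : ℂ) :=
  (hA.diag_cfc f).inner_self w

/-- Matrix convexity of order `n` on `s`, expressed by quadratic forms in eigenbases. -/
def QuadConvexOn (n : ℕ) (s : Set ℝ) (f : ℝ → ℝ) : Prop :=
  ∀ (T₀ T₁ T₂ : EuclideanSpace ℂ (Fin n) →ₗ[ℂ] EuclideanSpace ℂ (Fin n))
    (e₀ e₁ e₂ : OrthonormalBasis (Fin n) ℂ (EuclideanSpace ℂ (Fin n))) (d₀ d₁ d₂ : Fin n → ℝ)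
    (μ : ℝ), μ ∈ Icc (0 : ℝ) 1 → Diag T₀ e₀ d₀ → Diag T₁ e₁ d₁ → Diag T₂ e₂ d₂ →
    T₁ = (μ : ℂ) • T₀ + ((1 - μ : ℝ) : ℂ) • T₂ → (∀ i, d₀ i ∈ s) → (∀ i, d₂ i ∈ s) → ∀ w,
    quadForm e₁ d₁ f w ≤ μ * quadForm e₀ d₀ f w + (1 - μ) * quadForm e₂ d₂ f w

lemma MatrixConvexOrder.quadConvexOn {n : ℕ} {a b : ℝ} {f : ℝ → ℝ}
    (hf : MatrixConvexOrder n a b f) : QuadConvexOn n (Ioo a b) f := by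
  intro T₀ T₁ T₂ e₀ e₁ e₂ d₀ d₁ d₂ μ hμ h₀ h₁ h₂ hT hd₀ hd₂ w
  obtain ⟨A, rfl⟩ := Matrix.toEuclideanLin.surjective T₀
  obtain ⟨B, rfl⟩ := Matrix.toEuclideanLin.surjective T₂
  have hA : A.IsHermitian := Matrix.isSymmetric_toEuclideanLin_iff.1 h₀.isSymmetric
  have hB : B.IsHermitian := Matrix.isSymmetric_toEuclideanLin_iff.1 h₂.isSymmetric
  have hT' : T₁ = (μ • A + (1 - μ) • B).toEuclideanLin := by
    rw [hT, map_add, ← Complex.coe_smul, ← Complex.coe_smul, map_smul, map_smul]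
  subst hT'
  have hC : (μ • A + (1 - μ) • B).IsHermitian :=
    Matrix.isSymmetric_toEuclideanLin_iff.1 h₁.isSymmetric
  have key := hf A B hA hB μ hμ hC (h₀.mem_of_diag hA.diag (convex_Ioo a b) hd₀)
    (h₂.mem_of_diag hB.diag (convex_Ioo a b) hd₂)
  have h := (Matrix.isPositive_toEuclideanLin_iff.2 key).re_inner_nonneg_right w
  rw [map_sub, map_add, ← Complex.coe_smul, ← Complex.coe_smul, map_smul, map_smul,
    LinearMap.sub_apply, LinearMap.add_apply, LinearMap.smul_apply, LinearMap.smul_apply,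
    inner_sub_right, inner_add_right, inner_smul_right, inner_smul_right, hA.inner_cfc,
    hB.inner_cfc, hC.inner_cfc] at h
  rw [quadForm_eq_of_diag h₀ hA.diag, quadForm_eq_of_diag h₁ hC.diag,
    quadForm_eq_of_diag h₂ hB.diag]
  norm_cast at h
  simpa using h

section Smooth

open Polynomial

lemma option_elim_injective {κ : Type*} {x : κ → ℝ} (hx : Function.Injective x) {z : ℝ}
    (hz : ∀ k, x k ≠ z) : Function.Injective (fun o : Option κ => o.elim z x) := by
  rintro (_ | k) (_ | l) h
  · rfl
  · exact (hz l h.symm).elim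
  · exact (hz k h).elim
  · exact congrArg some (hx h)

variable {ι : Type*} [Fintype ι] {E : Type*} [NormedAddCommGroup E] [InnerProductSpace ℂ E]

lemma exists_adjPoly_eq [DecidableEq ι] {e : OrthonormalBasis ι ℂ E} {a : ι → ℝ} {v : E}
    (ha : Function.Injective a) (hv : ∀ i, inner ℂ (e i) v ≠ 0) {q : ℝ[X]}
    (hq : q.degree < Fintype.card ι) :
    ∃ w : E, ∀ x : ℝ, adjPoly e a v w x = ((q.eval x : ℝ) : ℂ) := by
  let c : ι → ℝ := fun i => q.eval (a i) / ∏ l, if l = i then 1 else a i - a l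
  have hv' : ∀ i, inner ℂ v (e i) ≠ 0 := fun i h0 => hv i (inner_eq_zero_symm.1 h0)
  have hw : ∀ i, inner ℂ v (e i) * inner ℂ (e i) (∑ k, ((c k : ℂ) / inner ℂ v (e k)) • e k) =
      c i := fun i => by
    rw [e.orthonormal.inner_right_fintype]
    field_simp [hv' i]
  refine ⟨∑ k, ((c k : ℂ) / inner ℂ v (e k)) • e k, fun x => ?_⟩
  simp only [adjPoly, hw]
  norm_cast
  by_cases hx : ∃ i, x = a i
  · obtain ⟨i, rfl⟩ := hx
    rw [Finset.sum_eq_single i]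
    · exact div_mul_cancel₀ _ (prod_ite_sub_ne_zero ha i)
    · intro k _ hk
      rw [Finset.prod_eq_zero (Finset.mem_univ i) (by simp [hk.symm]), mul_zero]
    · simp
  · push Not at hx
    have hx0 : ∏ l, (x - a l) ≠ 0 := Finset.prod_ne_zero_iff.2 fun l _ => sub_ne_zero.2 (hx l)
    have h := divDiff_eval (option_elim_injective ha fun k => (hx k).symm) q
      (hq.trans (by rw [Fintype.card_option]; exact_mod_cast Nat.lt_succ_self _))
    rw [divDiff_optionElim, Polynomial.coeff_eq_zero_of_degree_lt (by simpa using hq)] at h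
    have h1 : q.eval x = -(∑ k, q.eval (a k) /
        ((a k - x) * ∏ l, if l = k then 1 else a k - a l)) * ∏ l, (x - a l) := by
      field_simp at h
      linarith
    rw [h1, ← Finset.sum_neg_distrib, Finset.sum_mul]
    refine Finset.sum_congr rfl fun k _ => ?_
    have hp := prod_ite_sub_ne_zero ha k
    have hk : ∏ l, (x - a l) = (x - a k) * ∏ l, if l = k then 1 else x - a l := by
      rw [prod_ite_eq_prod_erase]
      exact (Finset.mul_prod_erase _ _ (Finset.mem_univ k)).symm
    have hxk : a k - x ≠ 0 := sub_ne_zero.2 (hx k).symm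
    rw [hk]
    simp only [c]
    field_simp
    ring

lemma isSymmetric_add_rankOne {T : E →ₗ[ℂ] E} (hT : T.IsSymmetric) (τ : ℝ) (v : E) :
    (T + (τ : ℂ) • (InnerProductSpace.rankOne ℂ v v).toLinearMap).IsSymmetric := by
  intro x y
  simp only [LinearMap.add_apply, LinearMap.smul_apply, ContinuousLinearMap.coe_coe,
    InnerProductSpace.rankOne_apply, inner_add_left, inner_add_right, inner_smul_left,
    inner_smul_right, hT x y, Complex.conj_ofReal, inner_conj_symm]
  ring

lemma add_rankOne_apply (T : E →ₗ[ℂ] E) (τ : ℝ) (v x : E) :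
    (T + (τ : ℂ) • (InnerProductSpace.rankOne ℂ v v).toLinearMap) x =
      T x + (τ * inner ℂ v x : ℂ) • v := by
  rw [LinearMap.add_apply, LinearMap.smul_apply, ContinuousLinearMap.coe_coe,
    InnerProductSpace.rankOne_apply, smul_smul]

lemma Diag.re_inner_add_rankOne_mem {T : E →ₗ[ℂ] E} {e : OrthonormalBasis ι ℂ E} {d : ι → ℝ}
    (hT : Diag T e d) {α β : ℝ} (hd : ∀ i, d i ∈ Icc α β) {τ : ℝ} (hτ : 0 ≤ τ) {v x : E}
    (hx : ‖x‖ = 1) :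
    (inner ℂ x ((T + (τ : ℂ) • (InnerProductSpace.rankOne ℂ v v).toLinearMap) x)).re ∈
      Icc α (β + τ * ‖v‖ ^ 2) := by
  rw [add_rankOne_apply, inner_add_right, inner_smul_right, mul_assoc, inner_mul_inner_symm_eq,
    ← Complex.ofReal_mul, Complex.add_re, Complex.ofReal_re]
  have h1 := hT.re_inner_mem (convex_Icc α β) hd hx
  have h2 : ‖inner ℂ v x‖ ≤ ‖v‖ := by simpa [hx] using norm_inner_le_norm (𝕜 := ℂ) v x
  have h3 : τ * ‖inner ℂ v x‖ ^ 2 ≤ τ * ‖v‖ ^ 2 := by gcongr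
  exact ⟨by nlinarith [h1.1, sq_nonneg ‖inner ℂ v x‖], by linarith [h1.2]⟩

/-- Convexity along a rank one segment, in terms of divided differences of order `2n`. -/
lemma QuadConvexOn.sum_divDiff_nonneg {n : ℕ} {s : Set ℝ} {f : ℝ → ℝ} (hf : QuadConvexOn n s f)
    {T : EuclideanSpace ℂ (Fin n) →ₗ[ℂ] EuclideanSpace ℂ (Fin n)}
    {v : EuclideanSpace ℂ (Fin n)}
    {e e₁ e₂ : OrthonormalBasis (Fin n) ℂ (EuclideanSpace ℂ (Fin n))} {c b₁ b₂ : Fin n → ℝ}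
    (h₀ : Diag T e c)
    (h₁ : Diag (T + ((1 : ℝ) : ℂ) • (InnerProductSpace.rankOne ℂ v v).toLinearMap) e₁ b₁)
    (h₂ : Diag (T + ((2 : ℝ) : ℂ) • (InnerProductSpace.rankOne ℂ v v).toLinearMap) e₂ b₂)
    (hc : Function.Injective c) (hv : ∀ i, inner ℂ (e i) v ≠ 0)
    (hcs : ∀ i, c i ∈ s) (hbs : ∀ i, b₂ i ∈ s) {q : ℝ[X]} (hq : q.degree < n) :
    ∃ κ : Fin n → ℝ, (∀ k, 0 < κ k) ∧
      (∀ k, Function.Injective (fun o : Option (Fin n ⊕ Fin n) => o.elim (b₂ k) (Sum.elim c b₁))) ∧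
      0 ≤ ∑ k, κ k * divDiff (fun o : Option (Fin n ⊕ Fin n) => o.elim (b₂ k) (Sum.elim c b₁))
        (fun t => f t * q.eval t ^ 2) := by
  have r₁ := h₀.rankOneRel h₁ (add_rankOne_apply T 1 v)
  have r₂ := h₀.rankOneRel h₂ (add_rankOne_apply T 2 v)
  have r₁₂ : RankOneRel e₁ b₁ e₂ b₂ 1 v := h₁.rankOneRel h₂ fun x => by
    rw [add_rankOne_apply, add_rankOne_apply, add_assoc, ← add_smul]
    congr 2
    push_cast
    ring
  have hd₁ := r₁.disjoint hc one_ne_zero hv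
  have hd₂ := r₂.disjoint hc two_ne_zero hv
  have hb₁ := r₁.injective hc one_ne_zero hv
  have hb₂ := r₂.injective hc two_ne_zero hv
  have hu₁ := r₁.inner_ne_zero hc hv
  have hu₂ := r₂.inner_ne_zero hc hv
  have hu₁' : ∀ i, inner ℂ (e₁ i) v ≠ 0 := fun i h => hu₁ i (inner_eq_zero_symm.1 h)
  have hd₁₂ := r₁₂.disjoint hb₁ one_ne_zero hu₁'
  obtain ⟨w, hw⟩ := exists_adjPoly_eq (e := e) hc hv (q := q) (by simpa using hq)
  have hF : (fun x => f x * ‖adjPoly e c v w x‖ ^ 2) = fun t => f t * q.eval t ^ 2 := by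
    funext x
    rw [hw, Complex.norm_real, Real.norm_eq_abs, sq_abs]
  have hQ := hf T _ _ e e₁ e₂ c b₁ b₂ (1 / 2) (by norm_num) h₀ h₁ h₂ (by
    ext x : 1
    simp only [LinearMap.add_apply, LinearMap.smul_apply, smul_add, smul_smul]
    push_cast
    module) hcs hbs w
  have q₁ := r₁.quadForm_sub hd₁ hc hb₁ hv hu₁ one_ne_zero f w
  have q₂ := r₂.quadForm_sub hd₂ hc hb₂ hv hu₂ two_ne_zero f w
  rw [hF] at q₁ q₂
  refine ⟨fun k => 1 * ‖inner ℂ (e₂ k) v‖ ^ 2, fun k => ?_, fun k => ?_, ?_⟩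
  · have : inner ℂ (e₂ k) v ≠ 0 := fun h => hu₂ k (inner_eq_zero_symm.1 h)
    positivity
  · refine option_elim_injective (hc.sumElim hb₁ fun i j => (hd₁ i j).symm) ?_
    rintro (i | i)
    · exact (hd₂ i k).symm
    · exact (hd₁₂ i k).symm
  · rw [← r₁₂.divDiff_sub hd₁₂ hb₁ hb₂ hu₁' hd₁ hd₂]
    linarith

lemma QuadConvexOn.iteratedDeriv_nonneg {n : ℕ} {α β : ℝ} {f : ℝ → ℝ}
    (hf : QuadConvexOn n (Ioo α β) f) (hn : 0 < n) (hs : ContDiff ℝ (2 * n : ℕ) f) {q : ℝ[X]}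
    (hq : q.degree < n) {t₀ : ℝ} (ht : t₀ ∈ Ioo α β) :
    0 ≤ iteratedDeriv (2 * n) (fun t => f t * q.eval t ^ 2) t₀ := by
  by_contra! hneg
  have hF : ContDiff ℝ (2 * n : ℕ) (fun t => f t * q.eval t ^ 2) :=
    hs.mul ((Polynomial.contDiff_aeval q _).pow 2)
  have hcont := hF.continuous_iteratedDeriv (2 * n) le_rfl
  obtain ⟨δ, hδ, hball⟩ := Metric.mem_nhds_iff.1 (Filter.inter_mem (isOpen_Ioo.mem_nhds ht)
    (hcont.continuousAt.eventually_lt continuousAt_const hneg))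
  have hI : ∀ t ∈ Ioo (t₀ - δ) (t₀ + δ), t ∈ Ioo α β ∧
      iteratedDeriv (2 * n) (fun t => f t * q.eval t ^ 2) t < 0 := fun t h =>
    hball (by rwa [Real.ball_eq_Ioo])
  have hn' : (0 : ℝ) < n := by exact_mod_cast hn
  let e := EuclideanSpace.basisFun (Fin n) ℂ
  let c : Fin n → ℝ := fun i => t₀ + δ / 2 * (i / n)
  have hc : Function.Injective c := fun i j hij => by
    have h1 : δ / 2 * ((i : ℝ) / n) = δ / 2 * (j / n) := add_left_cancel hij
    have h2 : (i : ℝ) = j := by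
      field_simp at h1
      exact h1
    exact Fin.ext (by exact_mod_cast h2)
  have hcI : ∀ i, c i ∈ Icc t₀ (t₀ + δ / 2) := fun i => by
    have h1 : (i : ℝ) / n ≤ 1 := by
      rw [div_le_one hn']
      exact_mod_cast i.2.le
    have h2 : 0 ≤ (i : ℝ) / n := by positivity
    exact ⟨by simp only [c]; nlinarith, by simp only [c]; nlinarith⟩
  let T : EuclideanSpace ℂ (Fin n) →ₗ[ℂ] EuclideanSpace ℂ (Fin n) :=
    e.toBasis.constr ℂ fun i => (c i : ℂ) • e i
  have h₀ : Diag T e c := fun i => by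
    have := e.toBasis.constr_basis ℂ (fun i => (c i : ℂ) • e i) i
    rwa [OrthonormalBasis.coe_toBasis] at this
  let η : ℝ := Real.sqrt (δ / (8 * n))
  have hη : 0 < η := Real.sqrt_pos.2 (by positivity)
  let v : EuclideanSpace ℂ (Fin n) := ∑ i, (η : ℂ) • e i
  have hvi : ∀ i, inner ℂ (e i) v = η := fun i => by
    rw [e.orthonormal.inner_right_fintype]
  have hv : ∀ i, inner ℂ (e i) v ≠ 0 := fun i => by
    rw [hvi]
    exact_mod_cast hη.ne'
  have hvn : ‖v‖ ^ 2 = δ / 8 := by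
    rw [← e.sum_sq_norm_inner_right v]
    simp only [hvi, Complex.norm_real, Real.norm_eq_abs, sq_abs, Finset.sum_const,
      Finset.card_univ, Fintype.card_fin, nsmul_eq_mul]
    rw [Real.sq_sqrt (by positivity)]
    field_simp
  obtain ⟨e₁, b₁, h₁⟩ := exists_diag (isSymmetric_add_rankOne h₀.isSymmetric 1 v)
  obtain ⟨e₂, b₂, h₂⟩ := exists_diag (isSymmetric_add_rankOne h₀.isSymmetric 2 v)
  have hmem₁ := h₁.mem_of_inner_mem fun x hx =>
    h₀.re_inner_add_rankOne_mem hcI zero_le_one (v := v) hx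
  have hmem₂ := h₂.mem_of_inner_mem fun x hx =>
    h₀.re_inner_add_rankOne_mem hcI zero_le_two (v := v) hx
  rw [hvn] at hmem₁ hmem₂
  have hb₁ : ∀ i, b₁ i ∈ Ioo (t₀ - δ) (t₀ + δ) := fun i =>
    ⟨by linarith [(hmem₁ i).1], by linarith [(hmem₁ i).2]⟩
  have hb₂ : ∀ i, b₂ i ∈ Ioo (t₀ - δ) (t₀ + δ) := fun i =>
    ⟨by linarith [(hmem₂ i).1], by linarith [(hmem₂ i).2]⟩
  have hc' : ∀ i, c i ∈ Ioo (t₀ - δ) (t₀ + δ) := fun i =>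
    ⟨by linarith [(hcI i).1], by linarith [(hcI i).2]⟩
  obtain ⟨κ, hκ, hinj, hsum⟩ := hf.sum_divDiff_nonneg h₀ h₁ h₂ hc hv (fun i => (hI _ (hc' i)).1)
    (fun i => (hI _ (hb₂ i)).1) hq
  refine hsum.not_gt (Finset.sum_neg (fun k _ => mul_neg_of_pos_of_neg (hκ k) ?_)
    ⟨⟨0, hn⟩, Finset.mem_univ _⟩)
  obtain ⟨ξ, hξ, hξe⟩ := exists_divDiff_eq hF (hinj k) (α := t₀ - δ) (β := t₀ + δ)
    (by rintro (_ | i | i); exacts [hb₂ k, hc' i, hb₁ i])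
    (by rw [Fintype.card_option, Fintype.card_sum, Fintype.card_fin]; ring)
  have hneg' := (hI ξ hξ).2
  rw [hξe] at hneg'
  exact (pos_iff_neg_of_mul_neg hneg').1 (by positivity)

/-- For a smooth matrix convex function of order `n`, the divided differences of order `2n` of
`f q²` are nonnegative, for every polynomial `q` of degree less than `n`. -/
lemma QuadConvexOn.divDiff_nonneg_of_contDiff {n : ℕ} {α β : ℝ} {f : ℝ → ℝ}
    (hf : QuadConvexOn n (Ioo α β) f) (hn : 0 < n) (hs : ContDiff ℝ (2 * n : ℕ) f) {q : ℝ[X]}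
    (hq : q.degree < n) {κ : Type*} [Fintype κ] [DecidableEq κ] {x : κ → ℝ}
    (hx : Function.Injective x) (hI : ∀ k, x k ∈ Ioo α β) (hκ : Fintype.card κ = 2 * n + 1) :
    0 ≤ divDiff x (fun t => f t * q.eval t ^ 2) := by
  have hF : ContDiff ℝ (2 * n : ℕ) (fun t => f t * q.eval t ^ 2) :=
    hs.mul ((Polynomial.contDiff_aeval q _).pow 2)
  obtain ⟨ξ, hξ, hξe⟩ := exists_divDiff_eq hF hx hI hκ
  have h := hf.iteratedDeriv_nonneg hn hs hq hξ
  rw [hξe] at h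
  exact nonneg_of_mul_nonneg_right h (by positivity)

end Smooth

section Mollify

open Polynomial MeasureTheory Filter Topology

lemma QuadConvexOn.convexOn {n : ℕ} (hn : 0 < n) {s : Set ℝ} {f : ℝ → ℝ} (hs : Convex ℝ s)
    (hf : QuadConvexOn n s f) : ConvexOn ℝ s f := by
  refine ⟨hs, fun x hx y hy μ ν hμ hν hμν => ?_⟩
  obtain rfl : ν = 1 - μ := by linarith
  let e := EuclideanSpace.basisFun (Fin n) ℂ
  have hdiag : ∀ c : ℝ, Diag ((c : ℂ) • LinearMap.id) e (fun _ => c) := fun c i => by simp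
  have hq : ∀ c : ℝ, quadForm e (fun _ => c) f (e ⟨0, hn⟩) = f c := fun c => by
    rw [quadForm, ← Finset.mul_sum, e.sum_sq_norm_inner_right, e.norm_eq_one]
    ring
  have h := hf _ _ _ e e e _ _ _ μ ⟨hμ, by linarith⟩ (hdiag x) (hdiag (μ * x + (1 - μ) * y))
    (hdiag y) (by push_cast; module) (fun _ => hx) (fun _ => hy) (e ⟨0, hn⟩)
  simpa only [hq, smul_eq_mul] using h

lemma Diag.mem_of_eq_combination {n : ℕ} {s : Set ℝ} (hs : Convex ℝ s)
    {T₀ T₁ T₂ : EuclideanSpace ℂ (Fin n) →ₗ[ℂ] EuclideanSpace ℂ (Fin n)}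
    {e₀ e₁ e₂ : OrthonormalBasis (Fin n) ℂ (EuclideanSpace ℂ (Fin n))} {d₀ d₁ d₂ : Fin n → ℝ}
    {μ : ℝ} (hμ : μ ∈ Icc (0 : ℝ) 1) (h₀ : Diag T₀ e₀ d₀) (h₁ : Diag T₁ e₁ d₁)
    (h₂ : Diag T₂ e₂ d₂) (hT : T₁ = (μ : ℂ) • T₀ + ((1 - μ : ℝ) : ℂ) • T₂)
    (hd₀ : ∀ i, d₀ i ∈ s) (hd₂ : ∀ i, d₂ i ∈ s) (i : Fin n) : d₁ i ∈ s := by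
  refine h₁.mem_of_inner_mem (fun x hx => ?_) i
  have := hs (h₀.re_inner_mem hs hd₀ hx) (h₂.re_inner_mem hs hd₂ hx) hμ.1 (sub_nonneg.2 hμ.2)
    (by ring)
  rw [hT, LinearMap.add_apply, LinearMap.smul_apply, LinearMap.smul_apply, inner_add_right,
    inner_smul_right, inner_smul_right, Complex.add_re, Complex.re_ofReal_mul,
    Complex.re_ofReal_mul]
  exact this

lemma quadForm_congr {n : ℕ} {e : OrthonormalBasis (Fin n) ℂ (EuclideanSpace ℂ (Fin n))}
    {d : Fin n → ℝ} {f g : ℝ → ℝ} (h : ∀ i, f (d i) = g (d i)) (w : EuclideanSpace ℂ (Fin n)) :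
    quadForm e d f w = quadForm e d g w := by
  simp only [quadForm, h]

lemma QuadConvexOn.congr {n : ℕ} {s t : Set ℝ} {f g : ℝ → ℝ} (hf : QuadConvexOn n s f)
    (hts : t ⊆ s) (ht : Convex ℝ t) (hfg : EqOn f g t) : QuadConvexOn n t g := by
  intro T₀ T₁ T₂ e₀ e₁ e₂ d₀ d₁ d₂ μ hμ h₀ h₁ h₂ hT hd₀ hd₂ w
  have hd₁ := Diag.mem_of_eq_combination ht hμ h₀ h₁ h₂ hT hd₀ hd₂
  rw [← quadForm_congr (fun i => hfg (hd₀ i)), ← quadForm_congr (fun i => hfg (hd₁ i)),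
    ← quadForm_congr (fun i => hfg (hd₂ i))]
  exact hf T₀ T₁ T₂ e₀ e₁ e₂ d₀ d₁ d₂ μ hμ h₀ h₁ h₂ hT (fun i => hts (hd₀ i))
    (fun i => hts (hd₂ i)) w

lemma integrable_normed_mul {φ : ContDiffBump (0 : ℝ)} {F : ℝ → ℝ} (hF : Continuous F) (x : ℝ) :
    Integrable (fun y => φ.normed volume y * F (x - y)) :=
  (φ.continuous_normed.mul (by fun_prop)).integrable_of_hasCompactSupport
    φ.hasCompactSupport_normed.mul_right

open scoped Convolution in
lemma QuadConvexOn.convolution {n : ℕ} {α β : ℝ} {F : ℝ → ℝ} (hF : QuadConvexOn n (Ioo α β) F)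
    (hc : Continuous F) (φ : ContDiffBump (0 : ℝ)) :
    QuadConvexOn n (Ioo (α + φ.rOut) (β - φ.rOut))
      (φ.normed volume ⋆[ContinuousLinearMap.lsmul ℝ ℝ, volume] F) := by
  intro T₀ T₁ T₂ e₀ e₁ e₂ d₀ d₁ d₂ μ hμ h₀ h₁ h₂ hT hd₀ hd₂ w
  have hintegrable : ∀ (e : OrthonormalBasis (Fin n) ℂ (EuclideanSpace ℂ (Fin n))) (d : Fin n → ℝ),
      Integrable (fun y => φ.normed volume y * quadForm e (fun i => d i + -y) F w) := by
    intro e d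
    simp only [quadForm, Finset.mul_sum, ← sub_eq_add_neg, ← mul_assoc]
    exact integrable_finsetSum _ fun i _ => (integrable_normed_mul hc _).mul_const _
  have hquad : ∀ (e : OrthonormalBasis (Fin n) ℂ (EuclideanSpace ℂ (Fin n))) (d : Fin n → ℝ),
      quadForm e d (φ.normed volume ⋆[ContinuousLinearMap.lsmul ℝ ℝ, volume] F) w =
        ∫ y, φ.normed volume y * quadForm e (fun i => d i + -y) F w := by
    intro e d
    simp only [quadForm, Finset.mul_sum, ← sub_eq_add_neg, ← mul_assoc]
    rw [integral_finsetSum _ fun i _ => (integrable_normed_mul hc _).mul_const _]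
    refine Finset.sum_congr rfl fun i _ => ?_
    rw [integral_mul_const, convolution_def]
    rfl
  rw [hquad, hquad, hquad, ← integral_const_mul, ← integral_const_mul,
    ← integral_add ((hintegrable _ _).const_mul _) ((hintegrable _ _).const_mul _)]
  refine integral_mono (hintegrable _ _)
    (((hintegrable _ _).const_mul _).add ((hintegrable _ _).const_mul _)) fun y => ?_
  have hφ := φ.nonneg_normed (μ := volume) y
  by_cases hy : φ.normed volume y = 0
  · simp [hy]
  · have hy' : y ∈ Function.support (φ.normed volume) := hy
    rw [φ.support_normed_eq, mem_ball_zero_iff, Real.norm_eq_abs, abs_lt] at hy'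
    have key := hF _ _ _ e₀ e₁ e₂ _ _ _ μ hμ (h₀.add_const (-y)) (h₁.add_const (-y))
      (h₂.add_const (-y)) (by rw [hT]; push_cast; module)
      (fun i => ⟨by linarith [(hd₀ i).1, hy'.2], by linarith [(hd₀ i).2, hy'.1]⟩)
      (fun i => ⟨by linarith [(hd₂ i).1, hy'.2], by linarith [(hd₂ i).2, hy'.1]⟩) w
    have := mul_le_mul_of_nonneg_left key hφ
    simp only
    linarith

/-- For a matrix convex function of order `n`, the divided differences of order `2n` of `f q²` are
nonnegative, for every polynomial `q` of degree less than `n`. -/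
lemma QuadConvexOn.divDiff_nonneg {n : ℕ} {α β : ℝ} {f : ℝ → ℝ}
    (hf : QuadConvexOn n (Ioo α β) f) (hn : 0 < n) {q : ℝ[X]} (hq : q.degree < n)
    {κ : Type*} [Fintype κ] [DecidableEq κ] {x : κ → ℝ}
    (hx : Function.Injective x) (hI : ∀ k, x k ∈ Ioo α β) (hκ : Fintype.card κ = 2 * n + 1) :
    0 ≤ divDiff x (fun t => f t * q.eval t ^ 2) := by
  have : Nonempty κ := Fintype.card_pos_iff.1 (by omega)
  have hcont : ContinuousOn f (Ioo α β) := (hf.convexOn hn (convex_Ioo α β)).continuousOn isOpen_Ioo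
  obtain ⟨k₀, hk₀⟩ := Finite.exists_min x
  obtain ⟨k₁, hk₁⟩ := Finite.exists_max x
  obtain ⟨α', hα, hα'⟩ := exists_between (hI k₀).1
  obtain ⟨β', hβ', hβ⟩ := exists_between (hI k₁).2
  have hI' : ∀ k, x k ∈ Ioo α' β' := fun k =>
    ⟨hα'.trans_le (hk₀ k), (hk₁ k).trans_lt hβ'⟩
  have hle : α' ≤ β' := ((hI' k₀).1.trans (hI' k₀).2).le
  let F : ℝ → ℝ := IccExtend hle fun t => f t
  have hFeq : EqOn f F (Icc α' β') := fun t ht => (IccExtend_of_mem hle (fun t => f t) ht).symm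
  have hFc : Continuous F := by
    refine Continuous.Icc_extend' ?_
    exact continuousOn_iff_continuous_domRestrict.1
      (hcont.mono fun t ht => ⟨hα.trans_le ht.1, ht.2.trans_lt hβ⟩)
  have hFq : QuadConvexOn n (Ioo α' β') F :=
    hf.congr (Ioo_subset_Ioo hα.le hβ.le) (convex_Ioo _ _) (hFeq.mono Ioo_subset_Icc_self)
  let φ : ℕ → ContDiffBump (0 : ℝ) := fun i =>
    { rIn := 1 / (i + 1 : ℝ) / 2
      rOut := 1 / (i + 1 : ℝ)
      rIn_pos := by positivity
      rIn_lt_rOut := half_lt_self (by positivity) }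
  have hφ : Tendsto (fun i => (φ i).rOut) atTop (𝓝 0) := tendsto_one_div_add_atTop_nhds_zero_nat
  have hlim := tendsto_divDiff (x := x) (F := fun t => f t * q.eval t ^ 2)
    (G := fun i t => (MeasureTheory.convolution ((φ i).normed volume) F
      (ContinuousLinearMap.lsmul ℝ ℝ) volume) t * q.eval t ^ 2) (l := atTop) fun k => by
    rw [hFeq (Ioo_subset_Icc_self (hI' k))]
    exact (ContDiffBump.convolution_tendsto_right_of_continuous hφ hFc (x k)).mul_const _
  refine ge_of_tendsto hlim ?_
  have hev : ∀ k, ∀ᶠ i in atTop, x k ∈ Ioo (α' + (φ i).rOut) (β' - (φ i).rOut) := fun k => by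
    have h1 : ∀ᶠ i in atTop, (φ i).rOut < x k - α' := hφ.eventually_lt_const (by linarith [(hI' k).1])
    have h2 : ∀ᶠ i in atTop, (φ i).rOut < β' - x k := hφ.eventually_lt_const (by linarith [(hI' k).2])
    filter_upwards [h1, h2] with i h1 h2
    exact ⟨by linarith, by linarith⟩
  filter_upwards [eventually_all.2 hev] with i hi
  refine (hFq.convolution hFc (φ i)).divDiff_nonneg_of_contDiff hn ?_ hq hx hi hκ
  exact_mod_cast (φ i).hasCompactSupport_normed.contDiff_convolution_left
    (ContinuousLinearMap.lsmul ℝ ℝ) (n := (2 * n : ℕ)) (φ i).contDiff_normed hFc.locallyIntegrable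

end Mollify

section Differentiable

open Filter Topology

lemma QuadConvexOn.rightDeriv_le_leftDeriv {n : ℕ} {α β : ℝ} {f : ℝ → ℝ}
    (hf : QuadConvexOn n (Ioo α β) f) (hn : 0 < n) {κ : Type*} [Fintype κ] [DecidableEq κ]
    {y : κ → ℝ} (hy : Function.Injective y) (hκ : Fintype.card κ + 2 = 2 * n) {t L R : ℝ}
    (ht : t ∈ Ioo α β) (hyI : ∀ k, y k ∈ Ioo α β) (hneg : ∏ k, (t - y k) < 0)
    (hR : HasDerivWithinAt f R (Ioi t) t) (hL : HasDerivWithinAt f L (Iio t) t) : R ≤ L := by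
  have hty : ∀ k, t - y k ≠ 0 := fun k => Finset.prod_ne_zero_iff.1 hneg.ne k (Finset.mem_univ k)
  let p : ℝ → ℝ := fun s => (∏ k, (s - y k))⁻¹
  have hp : HasDerivAt p (deriv p t) t := by
    refine DifferentiableAt.hasDerivAt (DifferentiableAt.fun_inv ?_ hneg.ne)
    exact DifferentiableAt.fun_finsetProd fun k _ => by fun_prop
  have hpt : p t < 0 := inv_lt_zero.2 hneg
  let G : ℝ → ℝ := fun h => ∑ k, f (y k) /
    (((y k - (t - h)) * (y k - t) * (y k - (t + h))) * ∏ l, if l = k then 1 else y k - y l)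
  have hG : ContinuousAt G 0 := by
    refine tendsto_finsetSum _ fun k _ => ContinuousAt.div (by fun_prop) (by fun_prop) ?_
    have h1 : y k - t ≠ 0 := fun h => hty k (by linarith)
    simpa [h1] using prod_ite_sub_ne_zero hy k
  have hplus : Tendsto (fun h => t + h) (𝓝[>] 0) (𝓝[>] t) := by
    refine tendsto_nhdsWithin_iff.2 ⟨?_, eventually_nhdsWithin_of_forall fun h hh => ?_⟩
    · exact Tendsto.mono_left (by simpa using (continuous_const_add t).tendsto 0) nhdsWithin_le_nhds
    · simpa using hh
  have hminus : Tendsto (fun h => t - h) (𝓝[>] 0) (𝓝[<] t) := by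
    refine tendsto_nhdsWithin_iff.2 ⟨?_, eventually_nhdsWithin_of_forall fun h hh => ?_⟩
    · exact Tendsto.mono_left (by simpa using (continuous_sub_left t).tendsto 0) nhdsWithin_le_nhds
    · simpa using hh
  have hSR := ((hasDerivWithinAt_iff_tendsto_slope' (by simp)).1
    (hR.mul hp.hasDerivWithinAt)).comp hplus
  have hSL := ((hasDerivWithinAt_iff_tendsto_slope' (by simp)).1
    (hL.mul hp.hasDerivWithinAt)).comp hminus
  have hid : Tendsto (fun h : ℝ => h) (𝓝[>] 0) (𝓝 0) := nhdsWithin_le_nhds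
  have hlim := (hSR.sub hSL).add ((hid.const_mul 2).mul (hG.tendsto.mono_left nhdsWithin_le_nhds))
  have hnn := ge_of_tendsto hlim (b := 0) ?_
  · nlinarith [hnn, hpt]
  have hev : ∀ k, ∀ᶠ h in 𝓝[>] (0 : ℝ), t + h ≠ y k ∧ t - h ≠ y k := fun k => by
    have h1 : t ≠ y k := sub_ne_zero.1 (hty k)
    exact ((hplus.mono_right nhdsWithin_le_nhds).eventually_ne h1).and
      ((hminus.mono_right nhdsWithin_le_nhds).eventually_ne h1)
  filter_upwards [eventually_all.2 hev, self_mem_nhdsWithin,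
    (hplus.mono_right nhdsWithin_le_nhds).eventually (isOpen_Ioo.mem_nhds ht),
    (hminus.mono_right nhdsWithin_le_nhds).eventually (isOpen_Ioo.mem_nhds ht)]
    with h hne hpos hp1 hm1
  have hpos : 0 < h := hpos
  have hxinj : Function.Injective ![t - h, t, t + h] := by
    intro i j hij
    fin_cases i <;> fin_cases j <;> first | rfl | (exfalso; simp at hij; linarith)
  have hinj : Function.Injective (Sum.elim ![t - h, t, t + h] y) := by
    refine hxinj.sumElim hy fun i k => ?_
    fin_cases i
    exacts [(hne k).2, sub_ne_zero.1 (hty k), (hne k).1]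
  have hD := hf.divDiff_nonneg hn (q := 1) (by simpa using hn) hinj (by
    rintro (i | k)
    · fin_cases i
      exacts [hm1, ht, hp1]
    · exact hyI k) (by rw [Fintype.card_sum, Fintype.card_fin]; omega)
  rw [divDiff_sumElim] at hD
  simp [Fin.sum_univ_three, Fin.prod_univ_three] at hD
  have hmul := mul_nonneg (mul_nonneg zero_le_two hpos.le) hD
  refine hmul.trans_eq ?_
  simp only [Function.comp, slope_def_field, G, p, Pi.mul_apply]
  have e1 : t + h - t = h := by ring
  have e2 : t - h - t = -h := by ring
  have e4 : t - h - (t + h) = -(2 * h) := by ring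
  have p1 : ∏ x, (t + h - y x) ≠ 0 :=
    Finset.prod_ne_zero_iff.2 fun k _ => sub_ne_zero.2 (hne k).1
  have p2 : ∏ x, (t - h - y x) ≠ 0 :=
    Finset.prod_ne_zero_iff.2 fun k _ => sub_ne_zero.2 (hne k).2
  have p3 := hneg.ne
  rw [e1, e2, e4, ← two_mul h, mul_add]
  congr 1
  field_simp
  ring

lemma QuadConvexOn.differentiableAt {n : ℕ} {α β : ℝ} {f : ℝ → ℝ}
    (hf : QuadConvexOn n (Ioo α β) f) (hn : 2 ≤ n) {t : ℝ} (ht : t ∈ Ioo α β) :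
    DifferentiableAt ℝ f t := by
  have hconv := hf.convexOn (by omega) (convex_Ioo α β)
  have hti : t ∈ interior (Ioo α β) := by rwa [interior_Ioo]
  have hR := hconv.hasDerivWithinAt_rightDeriv_of_mem_interior hti
  have hL := hconv.hasDerivWithinAt_leftDeriv_of_mem_interior hti
  let m := 2 * n - 3
  let y : Fin m → ℝ := fun j => t - (t - α) * ((j + 1) / (m + 1))
  have hta : 0 < t - α := sub_pos.2 ht.1
  have hj : ∀ j : Fin m, 0 < ((j : ℝ) + 1) / (m + 1) ∧ ((j : ℝ) + 1) / (m + 1) < 1 := fun j => by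
    refine ⟨by positivity, (div_lt_one (by positivity)).2 ?_⟩
    have : (j : ℝ) < m := by exact_mod_cast j.2
    linarith
  have hy : ∀ j, α < y j ∧ y j < t := fun j => by
    have := hj j
    simp only [y]
    constructor <;> nlinarith
  have hyinj : Function.Injective y := fun i j hij => by
    have h1 : (t - α) * (((i : ℝ) + 1) / (m + 1)) = (t - α) * ((j + 1) / (m + 1)) :=
      sub_right_injective hij
    have h2 := mul_left_cancel₀ hta.ne' h1
    have h3 : (i : ℝ) = j := by
      field_simp at h2
      linarith
    exact Fin.ext (by exact_mod_cast h3)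
  have hz : t < (t + β) / 2 := by linarith [ht.2]
  have hle := hf.rightDeriv_le_leftDeriv (by omega) (t := t)
    (option_elim_injective hyinj (z := (t + β) / 2) fun k => ((hy k).2.trans hz).ne)
    (by rw [Fintype.card_option, Fintype.card_fin]; omega) ht (by
      rintro (_ | k)
      · exact ⟨ht.1.trans hz, by change (t + β) / 2 < β; linarith [ht.2]⟩
      · exact ⟨(hy k).1, (hy k).2.trans ht.2⟩) (by
      rw [Fintype.prod_option]
      exact mul_neg_of_neg_of_pos (sub_neg.2 hz)
        (Finset.prod_pos fun k _ => sub_pos.2 (hy k).2)) hR hL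
  have heq := le_antisymm hle (hconv.leftDeriv_le_rightDeriv_of_mem_interior hti)
  rw [heq] at hR
  have := (hasDerivWithinAt_Iio_iff_Iic.1 hL).union (hasDerivWithinAt_Ioi_iff_Ici.1 hR)
  rw [Iic_union_Ici, hasDerivWithinAt_univ] at this
  exact this.differentiableAt

end Differentiable

section Monotone

open Polynomial Filter Topology

variable {n : ℕ} {α β : ℝ} {f : ℝ → ℝ}

lemma exists_normSq_adjPoly_eq {ι : Type*} [Fintype ι] [DecidableEq ι] {E : Type*}
    [NormedAddCommGroup E] [InnerProductSpace ℂ E] (e : OrthonormalBasis ι ℂ E) (a : ι → ℝ) (v w : E) :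
    ∃ r s : ℝ[X], r.degree < Fintype.card ι ∧ s.degree < Fintype.card ι ∧
      ∀ x, ‖adjPoly e a v w x‖ ^ 2 = r.eval x ^ 2 + s.eval x ^ 2 := by
  have key : ∀ c : ι → ℝ,
      (∑ i, C (c i) * Lagrange.nodal (Finset.univ.erase i) a).degree < Fintype.card ι ∧
      ∀ x, (∑ i, C (c i) * Lagrange.nodal (Finset.univ.erase i) a).eval x =
        ∑ i, c i * ∏ l, if l = i then 1 else x - a l := fun c => by
    refine ⟨?_, fun x => ?_⟩
    · rw [← Polynomial.mem_degreeLT]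
      refine Submodule.sum_mem _ fun i _ => ?_
      rw [← Polynomial.smul_eq_C_mul]
      refine Submodule.smul_mem _ _ (Polynomial.mem_degreeLT.2 ?_)
      rw [Lagrange.degree_nodal, Finset.card_erase_of_mem (Finset.mem_univ i), Finset.card_univ]
      exact_mod_cast Nat.sub_lt (Fintype.card_pos_iff.2 ⟨i⟩) one_pos
    · simp [Polynomial.eval_finsetSum, Lagrange.eval_nodal, prod_ite_eq_prod_erase]
  refine ⟨_, _, (key fun i => (inner ℂ v (e i) * inner ℂ (e i) w).re).1,
    (key fun i => (inner ℂ v (e i) * inner ℂ (e i) w).im).1, fun x => ?_⟩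
  rw [(key _).2, (key _).2, Complex.sq_norm, Complex.normSq_apply, adjPoly, Complex.re_sum,
    Complex.im_sum]
  simp only [Complex.re_mul_ofReal, Complex.im_mul_ofReal]
  ring

/-- Monotonicity of the divided difference `x ↦ [x, z]_f` along a generic rank one perturbation. -/
lemma QuadConvexOn.quadForm_slope_le (hf : QuadConvexOn n (Ioo α β) f) (hn : 0 < n)
    {e u : OrthonormalBasis (Fin n) ℂ (EuclideanSpace ℂ (Fin n))} {a b : Fin n → ℝ}
    {v : EuclideanSpace ℂ (Fin n)} (h : RankOneRel e a u b 1 v) (ha : Function.Injective a)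
    (hv : ∀ i, inner ℂ (e i) v ≠ 0) (haI : ∀ i, a i ∈ Ioo α β) (hbI : ∀ i, b i ∈ Ioo α β)
    {z : ℝ} (hz : z ∈ Ioo α β) (hza : ∀ i, a i ≠ z) (hzb : ∀ i, b i ≠ z)
    (w : EuclideanSpace ℂ (Fin n)) :
    quadForm e a (slope f z) w ≤ quadForm u b (slope f z) w := by
  have hd := h.disjoint ha one_ne_zero hv
  have hb := h.injective ha one_ne_zero hv
  have hq := h.quadForm_sub hd ha hb hv (h.inner_ne_zero ha hv) one_ne_zero (slope f z) w
  obtain ⟨r, s, hr, hs, hrs⟩ := exists_normSq_adjPoly_eq e a v w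
  rw [Fintype.card_fin] at hr hs
  have hzx : ∀ k, Sum.elim a b k ≠ z := by
    rintro (i | i)
    exacts [hza i, hzb i]
  have hx : Function.Injective (fun o : Option (Fin n ⊕ Fin n) => o.elim z (Sum.elim a b)) :=
    option_elim_injective (ha.sumElim hb fun i j => (hd i j).symm) hzx
  have hxI : ∀ o : Option (Fin n ⊕ Fin n), o.elim z (Sum.elim a b) ∈ Ioo α β := by
    rintro (_ | i | i)
    exacts [hz, haI i, hbI i]
  have hcard : Fintype.card (Option (Fin n ⊕ Fin n)) = 2 * n + 1 := by
    rw [Fintype.card_option, Fintype.card_sum, Fintype.card_fin]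
    ring
  have hsq : ∀ p : ℝ[X], p.degree < n → (p ^ 2).degree < ((2 * n : ℕ) : WithBot ℕ) := fun p hp => by
    rcases eq_or_ne p 0 with rfl | hp0
    · rw [zero_pow two_ne_zero, Polynomial.degree_zero]
      exact WithBot.bot_lt_coe _
    · rw [← Polynomial.natDegree_lt_iff_degree_lt (pow_ne_zero 2 hp0), Polynomial.natDegree_pow]
      have := (Polynomial.natDegree_lt_iff_degree_lt hp0).2 hp
      omega
  have hzero : ∀ p : ℝ[X], p.degree < n →
      divDiff (fun o : Option (Fin n ⊕ Fin n) => o.elim z (Sum.elim a b))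
        (fun t => p.eval t ^ 2) = 0 := fun p hp => by
    have := divDiff_eval hx (p ^ 2)
      ((hsq p hp).trans (by rw [hcard]; exact_mod_cast Nat.lt_succ_self _))
    rw [hcard, Nat.add_sub_cancel, Polynomial.coeff_eq_zero_of_degree_lt (hsq p hp)] at this
    simpa only [Polynomial.eval_pow] using this
  have hsplit : divDiff (Sum.elim a b) (fun x => slope f z x * ‖adjPoly e a v w x‖ ^ 2) =
      divDiff (fun o : Option (Fin n ⊕ Fin n) => o.elim z (Sum.elim a b))
        (fun t => (f t - f z) * (r.eval t ^ 2 + s.eval t ^ 2)) := by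
    rw [divDiff_optionElim, sub_self, zero_mul, zero_div, zero_add, divDiff]
    refine Finset.sum_congr rfl fun k _ => ?_
    have := sub_ne_zero.2 (hzx k)
    rw [slope_def_field, hrs]
    field_simp
  have hexp : (fun t => (f t - f z) * (r.eval t ^ 2 + s.eval t ^ 2)) =
      fun t => (f t * r.eval t ^ 2 + f t * s.eval t ^ 2) -
        f z * (r.eval t ^ 2 + s.eval t ^ 2) := by
    funext t
    ring
  rw [hsplit, hexp, divDiff_sub, divDiff_add, divDiff_const_mul, divDiff_add, hzero r hr,
    hzero s hs] at hq
  have h1 := hf.divDiff_nonneg hn hr hx hxI hcard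
  have h2 := hf.divDiff_nonneg hn hs hx hxI hcard
  linarith

lemma QuadConvexOn.tendsto_slope_dslope (hf : QuadConvexOn n (Ioo α β) f) (hn : 2 ≤ n) {c x : ℝ}
    (hx : x ∈ Ioo α β) (hc : c ∈ Ioo α β) :
    Tendsto (fun z => slope f z x) (𝓝[≠] c) (𝓝 (dslope f c x)) := by
  rcases eq_or_ne x c with rfl | hxc
  · rw [dslope_same]
    simp only [slope_comm f _ x]
    exact hasDerivAt_iff_tendsto_slope.1 (hf.differentiableAt hn hx).hasDerivAt
  · rw [dslope_of_ne f hxc]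
    have hcont := (hf.differentiableAt hn hc).continuousAt
    have : ContinuousAt (fun z => slope f z x) c := by
      simp only [slope_def_field]
      exact (continuousAt_const.sub hcont).div (by fun_prop) (sub_ne_zero.2 hxc)
    exact this.tendsto.mono_left nhdsWithin_le_nhds

lemma QuadConvexOn.continuousOn_dslope (hf : QuadConvexOn n (Ioo α β) f) (hn : 2 ≤ n) {c : ℝ}
    (hc : c ∈ Ioo α β) : ContinuousOn (dslope f c) (Ioo α β) := by
  rw [_root_.continuousOn_dslope (isOpen_Ioo.mem_nhds hc)]
  exact ⟨fun x hx => (hf.differentiableAt hn hx).continuousAt.continuousWithinAt,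
    hf.differentiableAt hn hc⟩

lemma eventually_punctured_nhds_ne (c x : ℝ) : ∀ᶠ z in 𝓝[≠] c, x ≠ z := by
  rcases eq_or_ne x c with rfl | hxc
  · filter_upwards [self_mem_nhdsWithin] with z hz using Ne.symm hz
  · filter_upwards [nhdsWithin_le_nhds (isOpen_ne.mem_nhds hxc.symm)] with z hz using Ne.symm hz

lemma QuadConvexOn.quadForm_dslope_le_of_generic (hf : QuadConvexOn n (Ioo α β) f) (hn : 2 ≤ n)
    {e u : OrthonormalBasis (Fin n) ℂ (EuclideanSpace ℂ (Fin n))} {a b : Fin n → ℝ}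
    {v : EuclideanSpace ℂ (Fin n)} (h : RankOneRel e a u b 1 v) (ha : Function.Injective a)
    (hv : ∀ i, inner ℂ (e i) v ≠ 0) (haI : ∀ i, a i ∈ Ioo α β) (hbI : ∀ i, b i ∈ Ioo α β)
    {c : ℝ} (hc : c ∈ Ioo α β) (w : EuclideanSpace ℂ (Fin n)) :
    quadForm e a (dslope f c) w ≤ quadForm u b (dslope f c) w := by
  have hlim : ∀ (e : OrthonormalBasis (Fin n) ℂ (EuclideanSpace ℂ (Fin n))) (a : Fin n → ℝ),
      (∀ i, a i ∈ Ioo α β) → Tendsto (fun z => quadForm e a (slope f z) w) (𝓝[≠] c)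
        (𝓝 (quadForm e a (dslope f c) w)) := fun e a haI =>
    tendsto_finsetSum _ fun i _ => (hf.tendsto_slope_dslope hn (haI i) hc).mul_const _
  refine le_of_tendsto_of_tendsto (hlim e a haI) (hlim u b hbI) ?_
  filter_upwards [nhdsWithin_le_nhds (isOpen_Ioo.mem_nhds hc),
    eventually_all.2 fun i => eventually_punctured_nhds_ne c (a i),
    eventually_all.2 fun i => eventually_punctured_nhds_ne c (b i)] with z hz hza hzb
  exact hf.quadForm_slope_le (by omega) h ha hv haI hbI hz hza hzb w

end Monotone

section Perturbation

open Filter Topology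
open scoped Matrix.Norms.L2Operator

variable {n : ℕ} {α β : ℝ}

lemma exists_isCompact_eigenvalues_mem {X : Type*} {l : Filter X}
    {M : X → Matrix (Fin n) (Fin n) ℂ} {A : Matrix (Fin n) (Fin n) ℂ} (hM : ∀ x, (M x).IsHermitian)
    (hA : A.IsHermitian) (h : Tendsto M l (𝓝 A)) (hI : ∀ i, hA.eigenvalues i ∈ Ioo α β) :
    ∃ s ⊆ Ioo α β, IsCompact s ∧ (∀ i, hA.eigenvalues i ∈ s) ∧
      ∀ᶠ x in l, ∀ i, (hM x).eigenvalues i ∈ s := by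
  set K := convexHull ℝ (range hA.eigenvalues) with hK
  have hKI : K ⊆ Ioo α β := convexHull_min (range_subset_iff.2 hI) (convex_Ioo α β)
  have hKc : IsCompact K := (finite_range _).isCompact_convexHull ℝ
  have hmem : ∀ i, hA.eigenvalues i ∈ K := fun i => subset_convexHull ℝ _ (mem_range_self i)
  obtain ⟨δ, hδ, hs⟩ := hKc.exists_cthickening_subset_open isOpen_Ioo hKI
  refine ⟨_, hs, hKc.cthickening, fun i => Metric.self_subset_cthickening K (hmem i), ?_⟩
  filter_upwards [h (Metric.closedBall_mem_nhds A hδ)] with x hx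
  refine (hM x).diag.mem_of_inner_mem fun y hy => ?_
  have hyK := hA.diag.re_inner_mem (convex_convexHull ℝ _) hmem hy
  refine Metric.mem_cthickening_of_dist_le _ _ δ K hyK ?_
  rw [Real.dist_eq, ← Complex.sub_re, ← inner_sub_right, ← LinearMap.sub_apply, ← map_sub]
  refine (Complex.abs_re_le_norm _).trans ((norm_inner_le_norm _ _).trans ?_)
  rw [hy, one_mul, Matrix.toLpLin_apply]
  refine (Matrix.l2_opNorm_mulVec _ _).trans ?_
  rw [hy, mul_one, ← dist_eq_norm]
  exact hx

lemma tendsto_quadForm_eigenvalues {X : Type*} {l : Filter X}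
    {M : X → Matrix (Fin n) (Fin n) ℂ} {A : Matrix (Fin n) (Fin n) ℂ} (hM : ∀ x, (M x).IsHermitian)
    (hA : A.IsHermitian) (h : Tendsto M l (𝓝 A)) (hI : ∀ i, hA.eigenvalues i ∈ Ioo α β)
    {g : ℝ → ℝ} (hg : ContinuousOn g (Ioo α β)) (w : EuclideanSpace ℂ (Fin n)) :
    (∀ᶠ x in l, ∀ i, (hM x).eigenvalues i ∈ Ioo α β) ∧
      Tendsto (fun x => quadForm (hM x).eigenvectorBasis (hM x).eigenvalues g w) l
        (𝓝 (quadForm hA.eigenvectorBasis hA.eigenvalues g w)) := by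
  obtain ⟨s, hsI, hs, hAs, hMs⟩ := exists_isCompact_eigenvalues_mem hM hA h hI
  refine ⟨hMs.mono fun x hx i => hsI (hx i), ?_⟩
  have hcfc : Tendsto (fun x => cfc g (M x)) l (𝓝 (cfc g A)) := by
    refine h.cfc hs g ?_ (Eventually.of_forall hM) ?_ hA (hg.mono hsI)
    · filter_upwards [hMs] with x hx
      rw [(hM x).spectrum_real_eq_range_eigenvalues]
      exact range_subset_iff.2 hx
    · rw [hA.spectrum_real_eq_range_eigenvalues]
      exact range_subset_iff.2 hAs
  have hcont : Continuous fun B : Matrix (Fin n) (Fin n) ℂ =>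
      (inner ℂ w (B.toEuclideanLin w)).re := by
    have : Continuous fun B : Matrix (Fin n) (Fin n) ℂ => B.toEuclideanLin w :=
      LinearMap.continuous_of_finiteDimensional (LinearMap.applyₗ w ∘ₗ
        (Matrix.toEuclideanLin (𝕜 := ℂ) (m := Fin n) (n := Fin n)).toLinearMap)
    fun_prop
  have := (hcont.tendsto _).comp hcfc
  simpa only [Function.comp_def, hA.cfc_eq, (hM _).cfc_eq, Matrix.IsHermitian.inner_cfc,
    Complex.ofReal_re] using this

lemma exists_diag_of_eigenvalues (e : OrthonormalBasis (Fin n) ℂ (EuclideanSpace ℂ (Fin n)))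
    (d : Fin n → ℝ) : ∃ D : Matrix (Fin n) (Fin n) ℂ, Diag D.toEuclideanLin e d := by
  obtain ⟨D, hD⟩ := Matrix.toEuclideanLin.surjective
    (e.toBasis.constr ℂ fun i => (d i : ℂ) • e i)
  refine ⟨D, fun i => ?_⟩
  have := e.toBasis.constr_basis ℂ (fun i => (d i : ℂ) • e i) i
  rwa [← hD, OrthonormalBasis.coe_toBasis] at this

lemma toEuclideanLin_vecMulVec (v : EuclideanSpace ℂ (Fin n)) :
    (vecMulVec v (star v.ofLp)).toEuclideanLin = (InnerProductSpace.rankOne ℂ v v).toLinearMap := by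
  rw [← LinearEquiv.eq_symm_apply, InnerProductSpace.symm_toEuclideanLin_rankOne]

lemma QuadConvexOn.quadForm_dslope_le_of_rankOne {f : ℝ → ℝ} (hf : QuadConvexOn n (Ioo α β) f)
    (hn : 2 ≤ n) {c : ℝ} (hc : c ∈ Ioo α β) {A B : Matrix (Fin n) (Fin n) ℂ}
    (hA : A.IsHermitian) (hB : B.IsHermitian) (hAI : ∀ i, hA.eigenvalues i ∈ Ioo α β)
    (hBI : ∀ i, hB.eigenvalues i ∈ Ioo α β) (v : EuclideanSpace ℂ (Fin n))
    (hAB : B = A + vecMulVec v (star v.ofLp)) (w : EuclideanSpace ℂ (Fin n)) :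
    quadForm hA.eigenvectorBasis hA.eigenvalues (dslope f c) w ≤
      quadForm hB.eigenvectorBasis hB.eigenvalues (dslope f c) w := by
  set e := hA.eigenvectorBasis
  set a := hA.eigenvalues
  obtain ⟨D, hD⟩ := exists_diag_of_eigenvalues e fun i => (i : ℝ)
  let M : ℝ → Matrix (Fin n) (Fin n) ℂ := fun δ => A + (δ : ℂ) • D
  let V : ℝ → EuclideanSpace ℂ (Fin n) := fun δ => v + (δ : ℂ) • ∑ i, e i
  let N : ℝ → Matrix (Fin n) (Fin n) ℂ := fun δ => M δ + vecMulVec (V δ) (star (V δ).ofLp)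
  have hMd : ∀ δ, Diag (M δ).toEuclideanLin e (fun i => a i + δ * i) := fun δ i => by
    have h1 : A.toEuclideanLin (e i) = (a i : ℂ) • e i := hA.diag i
    simp only [M, map_add, map_smul, LinearMap.add_apply, LinearMap.smul_apply, hD i, h1,
      smul_smul, ← add_smul]
    push_cast
    rfl
  have hNM : ∀ δ x, (N δ).toEuclideanLin x =
      (M δ).toEuclideanLin x + (((1 : ℝ) : ℂ) * inner ℂ (V δ) x) • V δ := fun δ x => by
    simp only [N, map_add, toEuclideanLin_vecMulVec]
    simp
  have hM : ∀ δ, (M δ).IsHermitian := fun δ =>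
    Matrix.isSymmetric_toEuclideanLin_iff.1 (hMd δ).isSymmetric
  have hN : ∀ δ, (N δ).IsHermitian := fun δ =>
    (hM δ).add (Matrix.posSemidef_vecMulVec_self_star _).isHermitian
  have hg := hf.continuousOn_dslope hn hc
  have hMt : Tendsto M (𝓝[≠] 0) (𝓝 A) := by
    have : Continuous M := by fun_prop
    simpa [M] using (this.tendsto 0).mono_left nhdsWithin_le_nhds
  have hNt : Tendsto N (𝓝[≠] 0) (𝓝 B) := by
    have : Continuous N := by fun_prop
    simpa [N, M, V, hAB] using (this.tendsto 0).mono_left nhdsWithin_le_nhds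
  obtain ⟨hMI, hMlim⟩ := tendsto_quadForm_eigenvalues hM hA hMt hAI hg w
  obtain ⟨hNI, hNlim⟩ := tendsto_quadForm_eigenvalues hN hB hNt hBI hg w
  refine le_of_tendsto_of_tendsto hMlim hNlim ?_
  filter_upwards [hMI, hNI,
    eventually_all.2 fun i => eventually_all.2 fun j =>
      eventually_punctured_nhds_ne 0 (-(a i - a j) / ((i : ℝ) - j)),
    eventually_all.2 fun i => eventually_punctured_nhds_ne 0 (-(inner ℂ (e i) v).re)]
    with δ hδM hδN hinj hδv
  rw [quadForm_eq_of_diag (hM δ).diag (hMd δ)]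
  refine hf.quadForm_dslope_le_of_generic hn ((hMd δ).rankOneRel (hN δ).diag (hNM δ)) ?_ ?_
    ((hM δ).diag.mem_of_diag (hMd δ) (convex_Ioo α β) hδM) hδN hc w
  · intro i j hij
    by_contra hne
    have h1 : (i : ℝ) - j ≠ 0 := sub_ne_zero.2 fun h => hne (Fin.ext (by exact_mod_cast h))
    refine hinj i j ?_
    rw [div_eq_iff h1]
    simp only at hij
    linarith
  · intro i hi
    refine hδv i ?_
    have h1 : inner ℂ (e i) (V δ) = inner ℂ (e i) v + δ := by
      rw [inner_add_right, inner_smul_right, inner_sum]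
      simp [orthonormal_iff_ite.1 e.orthonormal]
    rw [h1] at hi
    have := congrArg Complex.re hi
    simp at this
    linarith

lemma eigenvalues_mem_of_posSemidef_sub {A B C : Matrix (Fin n) (Fin n) ℂ} (hA : A.IsHermitian)
    (hB : B.IsHermitian) (hC : C.IsHermitian) (hAI : ∀ i, hA.eigenvalues i ∈ Ioo α β)
    (hBI : ∀ i, hB.eigenvalues i ∈ Ioo α β) (hAC : (C - A).PosSemidef) (hCB : (B - C).PosSemidef)
    (i : Fin n) : hC.eigenvalues i ∈ Ioo α β := by
  refine hC.diag.mem_of_inner_mem (fun x hx => ?_) i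
  have h1 := (Matrix.isPositive_toEuclideanLin_iff.2 hAC).re_inner_nonneg_right x
  have h2 := (Matrix.isPositive_toEuclideanLin_iff.2 hCB).re_inner_nonneg_right x
  rw [map_sub, LinearMap.sub_apply, inner_sub_right, RCLike.re_to_complex, Complex.sub_re] at h1 h2
  have h3 := hA.diag.re_inner_mem (convex_Ioo α β) hAI hx
  have h4 := hB.diag.re_inner_mem (convex_Ioo α β) hBI hx
  exact ⟨by linarith [h3.1], by linarith [h4.2]⟩

lemma QuadConvexOn.quadForm_dslope_le_of_eq_sum {f : ℝ → ℝ} (hf : QuadConvexOn n (Ioo α β) f)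
    (hn : 2 ≤ n) {c : ℝ} (hc : c ∈ Ioo α β) {B : Matrix (Fin n) (Fin n) ℂ} (hB : B.IsHermitian)
    (hBI : ∀ i, hB.eigenvalues i ∈ Ioo α β) (w : EuclideanSpace ℂ (Fin n)) {m : ℕ}
    (v : Fin m → Fin n → ℂ) {A : Matrix (Fin n) (Fin n) ℂ} (hA : A.IsHermitian)
    (hAI : ∀ i, hA.eigenvalues i ∈ Ioo α β)
    (hAB : B = A + ∑ i, vecMulVec (v i) (star (v i))) :
    quadForm hA.eigenvectorBasis hA.eigenvalues (dslope f c) w ≤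
      quadForm hB.eigenvectorBasis hB.eigenvalues (dslope f c) w := by
  induction m generalizing A with
  | zero =>
    obtain rfl : B = A := by simpa using hAB
    exact le_rfl
  | succ m ih =>
    rw [Fin.sum_univ_succ, ← add_assoc] at hAB
    have hp := Matrix.posSemidef_vecMulVec_self_star (v 0)
    have hC := hA.add hp.isHermitian
    have hCI := eigenvalues_mem_of_posSemidef_sub hA hB hC hAI hBI
      (by rwa [add_sub_cancel_left])
      (by
        rw [hAB, add_sub_cancel_left]
        exact Matrix.posSemidef_sum _ fun i _ => Matrix.posSemidef_vecMulVec_self_star _)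
    exact (hf.quadForm_dslope_le_of_rankOne hn hc hA hC hAI hCI (WithLp.toLp 2 (v 0)) rfl w).trans
      (ih (fun i => v i.succ) hC hCI hAB)

lemma QuadConvexOn.matrixMonotoneOrder_dslope {f : ℝ → ℝ} (hf : QuadConvexOn n (Ioo α β) f)
    (hn : 2 ≤ n) {c : ℝ} (hc : c ∈ Ioo α β) : MatrixMonotoneOrder n α β (dslope f c) := by
  intro A B hA hB hAI hBI hAB
  obtain ⟨m, v, hv⟩ := Matrix.posSemidef_iff_eq_sum_vecMulVec.1 hAB
  rw [← Matrix.isPositive_toEuclideanLin_iff, map_sub]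
  have hsymm := (hB.diag_cfc (dslope f c)).isSymmetric.sub (hA.diag_cfc (dslope f c)).isSymmetric
  refine ⟨hsymm, fun w => ?_⟩
  have := hf.quadForm_dslope_le_of_eq_sum hn hc hB hBI w v hA hAI (by rw [← hv, add_sub_cancel])
  rw [hsymm w w, LinearMap.sub_apply, inner_sub_right, hA.inner_cfc, hB.inner_cfc]
  simpa using this

end Perturbation

/-- If `f` is matrix convex of order `n` on `(a,b)` and `λ₀ ∈ (a,b)`, then
`g(x) = [x, λ₀]_f` is matrix monotone of order `n` on `(a,b)`. -/
theorem stmt18 (n : ℕ) (hn : 2 ≤ n) (a b : ℝ) (f : ℝ → ℝ)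
    (hf : MatrixConvexOrder n a b f)
    (lam0 : ℝ) (hlam0 : lam0 ∈ Ioo a b)
    (g : ℝ → ℝ)
    (hg : ∀ x, g x = if x = lam0 then derivWithin f (Ioo a b) lam0
      else (f x - f lam0) / (x - lam0)) :
    MatrixMonotoneOrder n a b g := by
  have hg' : g = dslope f lam0 := by
    funext x
    rw [hg]
    split_ifs with hx
    · rw [hx, dslope_same, derivWithin_of_isOpen isOpen_Ioo hlam0]
    · rw [dslope_of_ne f hx, slope_def_field]
  rw [hg']
  exact hf.quadConvexOn.matrixMonotoneOrder_dslope hn hlam0
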